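/- arXiv:1609.09707 — 9 statements merged into one kernel-verified Lean document; each statement's English description precedes it below -/
import Mathlib

section
/- Every order bounded increasing net of positive elements in an Archimedean vector lattice is order Cauchy. That is, if (x_α) is a net in a vector lattice X with 0 ≤ x_α ↑ ≤ x for some x ∈ X, then the doubly indexed net (x_α − x_{α'})_{(α,α')} order converges to 0. -/
open Filter Set

section Defs

variable {X : Type*} [Lattice X] [AddCommGroup X]
  [CovariantClass X X (· + ·) (· ≤ ·)]

/-- A net `x` *order converges* to `l`: there is a set `A ⊆ X` (playing the role of a net
`a_γ ↓ 0`), downward directed with infimum `0`, such that every `a ∈ A` eventually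
dominates `|x α - l|`. -/
def OrderTendsto {Γ : Type*} [Preorder Γ] (x : Γ → X) (l : X) : Prop :=
  ∃ A : Set X, A.Nonempty ∧ DirectedOn (· ≥ ·) A ∧ IsGLB A 0 ∧
    ∀ a ∈ A, ∃ α₀ : Γ, ∀ α, α₀ ≤ α → |x α - l| ≤ a

/-- A net `x` *uo-converges* to `l` if `|x α - l| ⊓ y` order converges to `0`
for every `y ≥ 0`. -/
def UoTendsto {Γ : Type*} [Preorder Γ] (x : Γ → X) (l : X) : Prop :=
  ∀ y : X, 0 ≤ y → OrderTendsto (fun α => |x α - l| ⊓ y) 0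

/-- A net is *order Cauchy* if the doubly indexed net of differences order converges to `0`. -/
def OrderCauchy {Γ : Type*} [Preorder Γ] (x : Γ → X) : Prop :=
  OrderTendsto (fun p : Γ × Γ => x p.1 - x p.2) 0

/-- A net is *uo-Cauchy* if the doubly indexed net of differences uo-converges to `0`. -/
def UoCauchy {Γ : Type*} [Preorder Γ] (x : Γ → X) : Prop :=
  UoTendsto (fun p : Γ × Γ => x p.1 - x p.2) 0

/-- The Archimedean property for a lattice-ordered group. -/
def VLArchimedean (X : Type*) [Lattice X] [AddCommGroup X] : Prop :=
  ∀ x y : X, 0 ≤ x → (∀ n : ℕ, n • x ≤ y) → x = 0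

end Defs

/-- Every order bounded increasing net of positive elements in an
Archimedean vector lattice is order Cauchy. -/
theorem stmt0 {X : Type*} [Lattice X] [AddCommGroup X]
    [CovariantClass X X (· + ·) (· ≤ ·)] [Module ℝ X] [PosSMulMono ℝ X]
    (harch : VLArchimedean X)
    {Γ : Type*} [Preorder Γ] [IsDirected Γ (· ≤ ·)] [Nonempty Γ]
    (x : Γ → X) (hmono : Monotone x) (hpos : ∀ α, 0 ≤ x α)
    (b : X) (hb : ∀ α, x α ≤ b) :
    OrderCauchy x := by
  haveI : AddLeftMono X := ⟨fun a _ _ h => CovariantClass.elim (μ := fun x y : X => x + y) a h⟩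
  refine ⟨{a | ∃ u α, (∀ β, x β ≤ u) ∧ a = u - x α}, ?_, ?_, ⟨?_, ?_⟩, ?_⟩
  · obtain ⟨α⟩ := ‹Nonempty Γ›
    exact ⟨b - x α, b, α, hb, rfl⟩
  · rintro _ ⟨u, α, hu, rfl⟩ _ ⟨v, β, hv, rfl⟩
    obtain ⟨γ, h1, h2⟩ := exists_ge_ge α β
    exact ⟨u ⊓ v - x γ, ⟨u ⊓ v, γ, fun δ => le_inf (hu δ) (hv δ), rfl⟩,
      sub_le_sub inf_le_left (hmono h1), sub_le_sub inf_le_right (hmono h2)⟩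
  · rintro _ ⟨u, α, hu, rfl⟩
    exact sub_nonneg.2 (hu α)
  · intro c hc
    have hd : ∀ u, (∀ β, x β ≤ u) → ∀ α, x α ≤ u - (c ⊔ 0) := by
      intro u hu α
      have h : c ⊔ 0 ≤ u - x α := sup_le (hc ⟨u, α, hu, rfl⟩) (sub_nonneg.2 (hu α))
      exact le_sub_comm.1 h
    have hn : ∀ n : ℕ, ∀ β, x β ≤ b - n • (c ⊔ 0) := by
      intro n
      induction n with
      | zero => simpa using hb
      | succ n ih =>
        intro β
        have := hd _ ih β
        rwa [sub_sub, ← succ_nsmul] at this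
    have h0 : c ⊔ 0 = 0 := by
      refine harch _ b le_sup_right fun n => ?_
      obtain ⟨α⟩ := ‹Nonempty Γ›
      exact sub_nonneg.1 ((hpos α).trans (hn n α))
    exact h0 ▸ le_sup_left
  · rintro _ ⟨u, α, hu, rfl⟩
    refine ⟨(α, α), fun p hp => ?_⟩
    have h1 : x α ≤ x p.1 := hmono hp.1
    have h2 : x α ≤ x p.2 := hmono hp.2
    simp only [sub_zero]
    refine abs_le'.2 ⟨sub_le_sub (hu _) h2, ?_⟩
    rw [neg_sub]
    exact sub_le_sub (hu _) h1
end

section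
/- Let X be an Archimedean vector lattice and let D be a subset of X₊. The following are equivalent: (1) the band generated by D equals X; (2) for every x ∈ X₊, if x ∧ d = 0 for all d ∈ D then x = 0; (3) for every net (x_α) in X₊, if x_α ∧ d →o 0 for every d ∈ D, then x_α →uo 0. -/
open Filter Set

/-- A (Riesz) ideal of a vector lattice: a solid linear subspace. -/
def IsRieszIdeal {X : Type*} [Lattice X] [AddCommGroup X] [Module ℝ X] (I : Set X) : Prop :=
  (0 : X) ∈ I ∧ (∀ x ∈ I, ∀ y ∈ I, x + y ∈ I) ∧ (∀ (c : ℝ), ∀ x ∈ I, c • x ∈ I) ∧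
    ∀ x y : X, |x| ≤ |y| → y ∈ I → x ∈ I

/-- A band: an order closed ideal, i.e. an ideal closed under existing suprema
of its subsets. -/
def IsBand {X : Type*} [Lattice X] [AddCommGroup X] [Module ℝ X] (B : Set X) : Prop :=
  IsRieszIdeal B ∧ ∀ A ⊆ B, ∀ s : X, IsLUB A s → s ∈ B

section Helpers

variable {X : Type*} [Lattice X] [AddCommGroup X]
  [CovariantClass X X (· + ·) (· ≤ ·)]

lemma aux_split (y z : X) : y = y ⊓ z + (y - z) ⊔ 0 := by
  rw [← add_right_cancel_iff (a := z), add_assoc, sup_add, sub_add_cancel, zero_add, inf_add_sup]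

lemma aux_inf_add (x y z : X) (hx : 0 ≤ x) (hy : 0 ≤ y) (hz : 0 ≤ z) :
    z ⊓ (x + y) ≤ z ⊓ x + z ⊓ y := by
  have h1 : z ⊓ (x + y) - z ⊓ x ≤ z ⊓ y := by
    apply le_inf
    · rw [sub_le_iff_le_add]
      exact inf_le_left.trans (le_add_of_nonneg_right (le_inf hz hx))
    · rw [sub_le_comm]
      apply le_inf
      · rw [sub_le_iff_le_add]
        exact inf_le_left.trans (le_add_of_nonneg_right hy)
      · rw [sub_le_iff_le_add]
        exact inf_le_right
  rw [sub_le_iff_le_add'] at h1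
  exact h1

lemma aux_inf_nsmul (x z : X) (hx : 0 ≤ x) (hz : 0 ≤ z) (n : ℕ) :
    z ⊓ (n • x) ≤ n • (z ⊓ x) := by
  induction n with
  | zero => simp
  | succ k ih =>
    rw [succ_nsmul, succ_nsmul]
    exact (aux_inf_add _ _ _ (nsmul_nonneg hx k) hx hz).trans (add_le_add_left ih _)

end Helpers

/-- For a set `D` of positive vectors in an Archimedean vector lattice `X`,
the following are equivalent: (1) the band generated by `D` is `X` (i.e. the only band
containing `D` is `X` itself); (2) any positive `x` disjoint from all elements of `D` is `0`;
(3) any net of positive vectors `(x_α)` with `x_α ⊓ d →o 0` for all `d ∈ D` is uo-null. -/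
theorem stmt2 {X : Type*} [Lattice X] [AddCommGroup X]
    [CovariantClass X X (· + ·) (· ≤ ·)] [Module ℝ X] [PosSMulMono ℝ X]
    (harch : VLArchimedean X) (D : Set X) (hD : ∀ d ∈ D, 0 ≤ d) :
    ((∀ B : Set X, IsBand B → D ⊆ B → B = Set.univ) ↔
        (∀ x : X, 0 ≤ x → (∀ d ∈ D, x ⊓ d = 0) → x = 0)) ∧
      ((∀ x : X, 0 ≤ x → (∀ d ∈ D, x ⊓ d = 0) → x = 0) ↔
        (∀ (Γ : Type*) [Preorder Γ] [IsDirected Γ (· ≤ ·)] [Nonempty Γ] (x : Γ → X),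
          (∀ α, 0 ≤ x α) → (∀ d ∈ D, OrderTendsto (fun α => x α ⊓ d) 0) →
            UoTendsto x 0)) := by
  have : IsOrderedAddMonoid X :=
    { add_le_add_left := fun a b hab c => by gcongr
      add_le_add_right := fun a b hab c => by gcongr }
  refine ⟨⟨?_, ?_⟩, ⟨?_, ?_⟩⟩
  · intro h x hx hd
    have key : ∀ p q : X, 0 ≤ p → p ≤ q → q ⊓ x = 0 → p ⊓ x = 0 := fun p q hp hpq hq =>
      le_antisymm ((inf_le_inf_right x hpq).trans hq.le) (le_inf hp hx)
    have hadd : ∀ p q : X, 0 ≤ p → 0 ≤ q → p ⊓ x = 0 → q ⊓ x = 0 → (p + q) ⊓ x = 0 := by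
      intro p q hp hq h1 h2
      apply le_antisymm _ (le_inf (add_nonneg hp hq) hx)
      rw [inf_comm] at h1 h2 ⊢
      have := aux_inf_add p q x hp hq hx
      rwa [h1, h2, add_zero] at this
    have hB : IsBand {y : X | |y| ⊓ x = 0} := by
      refine ⟨⟨?_, ?_, ?_, ?_⟩, ?_⟩
      · simp [hx]
      · intro a ha b hb
        exact key _ (|a| + |b|) (abs_nonneg _) (abs_add_le a b)
          (hadd _ _ (abs_nonneg _) (abs_nonneg _) ha hb)
      · intro c a ha
        obtain ⟨n, hn⟩ := exists_nat_ge |c|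
        refine key _ (n • |a|) (abs_nonneg _) ?_ ?_
        · have h1 : ∀ (c : ℝ) (n : ℕ) (a : X), |c| ≤ n → c • a ≤ n • |a| := by
            intro c n a hc
            have e1 : ((n : ℝ) + c) • a ≤ ((n : ℝ) + c) • |a| :=
              smul_le_smul_of_nonneg_left (le_abs_self a) (by linarith [neg_abs_le c])
            have e2 : ((n : ℝ) - c) • (-a) ≤ ((n : ℝ) - c) • |a| :=
              smul_le_smul_of_nonneg_left (neg_le_abs a) (by linarith [le_abs_self c])
            have e3 := smul_le_smul_of_nonneg_left (add_le_add e1 e2)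
              (by norm_num : (0 : ℝ) ≤ 1 / 2)
            convert e3 using 1
            · module
            · rw [← Nat.cast_smul_eq_nsmul ℝ]; module
          rw [abs]
          apply sup_le (h1 c n a hn)
          rw [← neg_smul]
          exact h1 (-c) n a (by rwa [abs_neg])
        · apply le_antisymm _ (le_inf (nsmul_nonneg (abs_nonneg _) n) hx)
          have := aux_inf_nsmul |a| x (abs_nonneg _) hx n
          have ha' : |a| ⊓ x = 0 := ha
          rw [inf_comm] at ha' ⊢
          rwa [ha', smul_zero] at this
      · intro a b hab hb
        exact key _ _ (abs_nonneg _) hab hb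
      · intro A hA s hs
        rcases A.eq_empty_or_nonempty with hne | hne
        · subst hne
          have hb : ∀ z : X, s ≤ z := fun z => hs.2 (by simp)
          have hx0 : x = 0 := by
            apply le_antisymm _ hx
            have h3 := hb (s - x)
            have h4 : x ≤ 0 := by
              have := sub_nonneg.2 h3
              simpa using this
            exact h4
          show |s| ⊓ x = 0
          rw [hx0]
          exact inf_eq_right.2 (abs_nonneg _)
        have hp : s⁺ ⊓ x = 0 := by
          apply le_antisymm _ (le_inf (posPart_nonneg _) hx)
          have hub : s - s⁺ ⊓ x ∈ upperBounds A := by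
            intro a ha
            have has := hs.1 ha
            have h1 : a⁺ ⊓ x = 0 := key _ _ (posPart_nonneg _) (sup_le (le_abs_self a) (abs_nonneg a)) (hA ha)
            have h2 : a⁺ ⊓ (s⁺ ⊓ x) = 0 := by
              apply le_antisymm _ (le_inf (posPart_nonneg _) (le_inf (posPart_nonneg _) hx))
              exact (inf_le_inf_left _ inf_le_right).trans h1.le
            have h3 : a⁺ + s⁺ ⊓ x ≤ s⁺ := by
              rw [← inf_add_sup, h2, zero_add]
              exact sup_le (posPart_mono has) inf_le_left
            have h4 : s⁻ ≤ a⁻ := negPart_anti has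
            have h5 : a + s⁺ ⊓ x ≤ s := by
              calc a + s⁺ ⊓ x = (a⁺ + s⁺ ⊓ x) - a⁻ := by
                    nth_rewrite 1 [← posPart_sub_negPart a]; abel
                _ ≤ s⁺ - s⁻ := sub_le_sub h3 h4
                _ = s := posPart_sub_negPart s
            exact le_sub_iff_add_le.2 h5
          have := hs.2 hub
          simpa using this
        obtain ⟨a, ha⟩ := hne
        have hm : s⁻ ⊓ x = 0 := key _ _ (negPart_nonneg _)
          ((negPart_anti (hs.1 ha)).trans (sup_le (neg_le_abs a) (abs_nonneg a))) (hA ha)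
        show |s| ⊓ x = 0
        rw [← posPart_add_negPart]
        exact hadd _ _ (posPart_nonneg _) (negPart_nonneg _) hp hm
    have hu := h _ hB (fun d hdD => by
      show |d| ⊓ x = 0
      rw [abs_of_nonneg (hD d hdD), inf_comm]; exact hd d hdD)
    have hxB : x ∈ {y : X | |y| ⊓ x = 0} := by rw [hu]; trivial
    have hxB' : |x| ⊓ x = 0 := hxB
    rwa [abs_of_nonneg hx, inf_idem] at hxB'
  · intro h B hB hDB
    obtain ⟨⟨h0, hadd, hsmul, hsolid⟩, hsup⟩ := hB
    have hpos : ∀ x : X, 0 ≤ x → x ∈ B := by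
      intro x hx
      refine hsup {b | b ∈ B ∧ 0 ≤ b ∧ b ≤ x} (fun b hb => hb.1) x ⟨fun b hb => hb.2.2, ?_⟩
      intro u hu
      have hsp := aux_split x u
      have hv : (x - u) ⊔ 0 = 0 := by
        apply h _ le_sup_right
        intro d hd
        have hw0 : 0 ≤ ((x - u) ⊔ 0) ⊓ d := le_inf le_sup_right (hD d hd)
        have hwB : ((x - u) ⊔ 0) ⊓ d ∈ B := by
          apply hsolid _ d _ (hDB hd)
          rw [abs_of_nonneg hw0, abs_of_nonneg (hD d hd)]
          exact inf_le_right
        apply harch _ x hw0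
        have hn : ∀ n : ℕ, n • (((x - u) ⊔ 0) ⊓ d) ∈ {b | b ∈ B ∧ 0 ≤ b ∧ b ≤ x} := by
          intro n
          induction n with
          | zero => simpa using ⟨h0, hx⟩
          | succ k ih =>
            refine ⟨?_, nsmul_nonneg hw0 _, ?_⟩
            · rw [succ_nsmul]; exact hadd _ ih.1 _ hwB
            · rw [succ_nsmul]
              calc _ ≤ x ⊓ u + (x - u) ⊔ 0 :=
                    add_le_add (le_inf ih.2.2 (hu ih)) inf_le_left
                _ = x := hsp.symm
        exact fun n => (hn n).2.2
      rw [hv, add_zero] at hsp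
      rw [hsp]; exact inf_le_right
    apply Set.eq_univ_of_forall
    intro x
    apply hsolid x |x| (by rw [abs_abs]) (hpos _ (abs_nonneg _))
  · intro h Γ _ _ _ x hx hconv y hy
    have habs : ∀ α, |(|x α - 0| ⊓ y) - 0| = x α ⊓ y := by
      intro α
      rw [sub_zero, sub_zero, abs_of_nonneg (hx α), abs_of_nonneg (le_inf (hx α) hy)]
    refine ⟨{a | ∃ α₀ : Γ, ∀ α, α₀ ≤ α → x α ⊓ y ≤ a}, ?_, ?_, ⟨?_, ?_⟩, ?_⟩
    · exact ⟨y, Classical.arbitrary Γ, fun α _ => inf_le_right⟩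
    · rintro a ⟨α, ha⟩ b ⟨β, hb⟩
      obtain ⟨γ, h1, h2⟩ := exists_ge_ge α β
      exact ⟨a ⊓ b, ⟨γ, fun δ hδ => le_inf (ha δ (h1.trans hδ)) (hb δ (h2.trans hδ))⟩,
        inf_le_left, inf_le_right⟩
    · rintro a ⟨α, ha⟩
      exact (le_inf (hx α) hy).trans (ha α le_rfl)
    · intro l hl
      have hv : l ⊔ 0 = 0 := by
        apply h _ le_sup_right
        intro d hd
        have hlb : ∀ a : X, (∃ α₀ : Γ, ∀ α, α₀ ≤ α → x α ⊓ y ≤ a) → l ⊔ 0 ≤ a := by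
          rintro a ⟨α, ha⟩
          exact sup_le (hl ⟨α, ha⟩) ((le_inf (hx α) hy).trans (ha α le_rfl))
        have hd0 := hD d hd
        have hvn : ∀ n : ℕ, l ⊔ 0 ≤ (y - n • d) ⊔ 0 := by
          intro n
          rcases Nat.eq_zero_or_pos n with rfl | hn
          · rw [zero_smul, sub_zero]
            exact (hlb y ⟨Classical.arbitrary Γ, fun α _ => inf_le_right⟩).trans le_sup_left
          obtain ⟨A, _, _, hglb, hA⟩ := hconv d hd
          have hn' : (0 : ℝ) < n := by exact_mod_cast hn
          have hle : ((n : ℝ)⁻¹) • (l ⊔ 0 - (y - n • d) ⊔ 0) ≤ 0 := by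
            apply hglb.2
            intro a ha
            obtain ⟨α₀, hα₀⟩ := hA a ha
            have h1 : l ⊔ 0 ≤ n • a + (y - n • d) ⊔ 0 := by
              apply hlb
              refine ⟨α₀, fun α hα => ?_⟩
              have h2 := hα₀ α hα
              rw [sub_zero, abs_of_nonneg (le_inf (hx α) hd0)] at h2
              rw [aux_split (x α ⊓ y) (n • d)]
              apply add_le_add
              · calc x α ⊓ y ⊓ n • d ≤ x α ⊓ n • d := inf_le_inf_right _ inf_le_left
                  _ ≤ n • (x α ⊓ d) := aux_inf_nsmul _ _ hd0 (hx α) n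
                  _ ≤ n • a := nsmul_le_nsmul_right h2 n
              · exact sup_le_sup_right (sub_le_sub_right inf_le_right _) _
            have h3 := smul_le_smul_of_nonneg_left (sub_le_iff_le_add.2 h1)
              (inv_nonneg.2 hn'.le)
            rwa [← Nat.cast_smul_eq_nsmul ℝ n a, smul_smul, inv_mul_cancel₀ hn'.ne',
              one_smul] at h3
          have h4 := smul_le_smul_of_nonneg_left hle hn'.le
          rw [smul_smul, mul_inv_cancel₀ hn'.ne', one_smul, smul_zero] at h4
          exact sub_nonpos.1 h4
        apply harch _ y (le_inf le_sup_right hd0)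
        have hn : ∀ n : ℕ, n • ((l ⊔ 0) ⊓ d) ≤ y := by
          intro n
          induction n with
          | zero => simpa using hy
          | succ k ih =>
            rw [succ_nsmul]
            calc _ ≤ y ⊓ k • d + (y - k • d) ⊔ 0 :=
                  add_le_add (le_inf ih (nsmul_le_nsmul_right inf_le_right k))
                    (inf_le_left.trans (hvn k))
              _ = y := (aux_split _ _).symm
        exact hn
      exact sup_eq_right.1 hv
    · rintro a ⟨α, ha⟩
      exact ⟨α, fun β hβ => by rw [habs]; exact ha β hβ⟩
  · intro h x hx hd
    obtain ⟨A, _, _, hglb, hA⟩ := h PUnit (fun _ => x) (fun _ => hx)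
      (fun d hdD => ⟨{0}, Set.singleton_nonempty 0, by
        intro a ha b hb; exact ⟨a, ha, le_rfl, by simp_all⟩, isGLB_singleton, by
        intro a ha
        refine ⟨PUnit.unit, fun α _ => ?_⟩
        rw [Set.mem_singleton_iff] at ha
        simp [hd d hdD, ha]⟩) x hx
    apply le_antisymm _ hx
    apply hglb.2
    intro a ha
    obtain ⟨α, hα⟩ := hA a ha
    have := hα α le_rfl
    beta_reduce at this
    rwa [sub_zero, sub_zero, abs_of_nonneg hx, inf_idem, abs_of_nonneg hx] at this
end

section
/- Let X be an order complete vector lattice with a weak unit u > 0. A net (x_α) in X is uo-Cauchy if and only if inf_α sup_{β, β' ≥ α} |x_β − x_{β'}| ∧ u = 0. -/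
open Filter Set

theorem inf_le_of_isLUB_aux {X : Type*} [Lattice X] [AddCommGroup X]
    [CovariantClass X X (· + ·) (· ≤ ·)] {D : Set X} {t u s : X} (ht : IsLUB D t)
    (h : ∀ d ∈ D, d ⊓ u ≤ s) : t ⊓ u ≤ s := by
  have h1 : t ≤ s + (t ⊔ u) - u := by
    apply ht.2
    intro d hd
    rw [le_sub_iff_add_le, ← inf_add_sup d u]
    exact add_le_add (h d hd) (sup_le_sup_right (ht.1 hd) u)
  rw [le_sub_iff_add_le, ← inf_add_sup t u] at h1
  exact le_of_add_le_add_right h1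

/-- In an order complete vector lattice with a weak unit `u > 0`, a net
`(x_α)` is uo-Cauchy iff `inf_α sup_{β, β' ≥ α} |x_β - x_β'| ⊓ u = 0`, i.e. iff there is a
function `s` assigning to each index `α` the supremum of `{|x_β - x_β'| ⊓ u : β, β' ≥ α}`,
such that `inf_α s α = 0`. -/
theorem stmt5 {X : Type*} [Lattice X] [AddCommGroup X]
    [CovariantClass X X (· + ·) (· ≤ ·)] [Module ℝ X] [PosSMulMono ℝ X]
    (harch : VLArchimedean X)
    -- `X` is order complete:
    (hdc : ∀ S : Set X, S.Nonempty → BddBelow S → BddAbove S → ∃ s, IsLUB S s)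
    -- `u` is a weak unit:
    (u : X) (hu : 0 < u) (huweak : ∀ x : X, 0 ≤ x → x ⊓ u = 0 → x = 0)
    {Γ : Type*} [Preorder Γ] [IsDirected Γ (· ≤ ·)] [Nonempty Γ] (x : Γ → X) :
    UoCauchy x ↔
      ∃ s : Γ → X,
        (∀ α : Γ, IsLUB {v : X | ∃ β β' : Γ, α ≤ β ∧ α ≤ β' ∧ v = |x β - x β'| ⊓ u} (s α)) ∧
        IsGLB (Set.range s) 0 := by
  have hexists : ∀ y : X, 0 ≤ y → ∃ s : Γ → X, ∀ α : Γ,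
      IsLUB {v : X | ∃ β β' : Γ, α ≤ β ∧ α ≤ β' ∧ v = |x β - x β'| ⊓ y} (s α) := by
    intro y hy
    have : ∀ α : Γ, ∃ s : X,
        IsLUB {v : X | ∃ β β' : Γ, α ≤ β ∧ α ≤ β' ∧ v = |x β - x β'| ⊓ y} s := by
      intro α
      apply hdc
      · exact ⟨_, α, α, le_refl _, le_refl _, rfl⟩
      · refine ⟨0, ?_⟩
        rintro v ⟨β, β', -, -, rfl⟩
        exact le_inf (abs_nonneg _) hy
      · refine ⟨y, ?_⟩
        rintro v ⟨β, β', -, -, rfl⟩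
        exact inf_le_right
    exact ⟨fun α => (this α).choose, fun α => (this α).choose_spec⟩
  have hpos : ∀ y : X, 0 ≤ y → ∀ s : Γ → X, (∀ α : Γ,
      IsLUB {v : X | ∃ β β' : Γ, α ≤ β ∧ α ≤ β' ∧ v = |x β - x β'| ⊓ y} (s α)) →
      ∀ α, 0 ≤ s α := by
    intro y hy s hs α
    exact le_trans (le_inf (abs_nonneg _) hy)
      ((hs α).1 ⟨α, α, le_refl _, le_refl _, rfl⟩)
  constructor
  · intro h
    obtain ⟨s, hs⟩ := hexists u hu.le
    refine ⟨s, hs, ?_, ?_⟩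
    · rintro _ ⟨α, rfl⟩
      exact hpos u hu.le s hs α
    · intro b hb
      obtain ⟨A, -, -, hA, hAx⟩ := h u hu.le
      apply hA.2
      intro a ha
      obtain ⟨⟨α₁, α₂⟩, hα⟩ := hAx a ha
      obtain ⟨α, h1, h2⟩ := exists_ge_ge α₁ α₂
      refine le_trans (hb ⟨α, rfl⟩) ((hs α).2 ?_)
      rintro v ⟨β, β', hβ, hβ', rfl⟩
      have := hα (β, β') ⟨h1.trans hβ, h2.trans hβ'⟩
      simp only [sub_zero] at this
      exact (le_abs_self _).trans this
  · rintro ⟨s, hs, hinf⟩ y hy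
    obtain ⟨t, ht⟩ := hexists y hy
    have htpos := hpos y hy t ht
    have hanti : ∀ α γ, α ≤ γ → t γ ≤ t α := by
      intro α γ hαγ
      apply (ht γ).2
      rintro v ⟨β, β', hβ, hβ', rfl⟩
      exact (ht α).1 ⟨β, β', hαγ.trans hβ, hαγ.trans hβ', rfl⟩
    refine ⟨Set.range t, Set.range_nonempty t, ?_, ⟨?_, ?_⟩, ?_⟩
    · rintro _ ⟨α, rfl⟩ _ ⟨γ, rfl⟩
      obtain ⟨δ, h1, h2⟩ := exists_ge_ge α γ
      exact ⟨t δ, ⟨δ, rfl⟩, hanti _ _ h1, hanti _ _ h2⟩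
    · rintro _ ⟨α, rfl⟩
      exact htpos α
    · intro b hb
      have hc : (b ⊔ 0) = 0 := by
        apply huweak _ le_sup_right
        apply le_antisymm _ (le_inf le_sup_right hu.le)
        apply hinf.2
        rintro _ ⟨α, rfl⟩
        refine le_trans (inf_le_inf_right u (sup_le (hb ⟨α, rfl⟩) (htpos α))) ?_
        apply inf_le_of_isLUB_aux (ht α)
        rintro v ⟨β, β', hβ, hβ', rfl⟩
        exact le_trans (inf_le_inf_right u inf_le_left) ((hs α).1 ⟨β, β', hβ, hβ', rfl⟩)
      exact hc ▸ le_sup_left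
    · rintro _ ⟨α, rfl⟩
      refine ⟨(α, α), ?_⟩
      rintro ⟨β, β'⟩ ⟨h1, h2⟩
      simp only [sub_zero]
      rw [abs_of_nonneg (le_inf (abs_nonneg _) hy)]
      exact (ht α).1 ⟨β, β', h1, h2, rfl⟩
end

section
/- Let X be a universally complete vector lattice with the countable sup property. Then X is uo-complete: every uo-Cauchy net in X uo-converges to some element of X. -/
open Filter Set

section Helpers

variable {X : Type*} [Lattice X] [AddCommGroup X]
  [CovariantClass X X (· + ·) (· ≤ ·)]

/-- Disjointness is preserved under sums. -/
lemma disj_add {a b w : X} (ha : 0 ≤ a) (hb : 0 ≤ b) (hw : 0 ≤ w)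
    (haw : a ⊓ w = 0) (hbw : b ⊓ w = 0) : (a + b) ⊓ w = 0 := by
  apply le_antisymm _ (le_inf (add_nonneg ha hb) hw)
  have h1 : (a + b) ⊓ w ≤ b := by
    rw [← sub_nonpos, ← haw]
    apply le_inf
    · rw [sub_le_iff_le_add]; exact inf_le_left
    · rw [sub_le_iff_le_add]; exact inf_le_right.trans (le_add_of_nonneg_right hb)
  rw [← hbw]
  exact le_inf h1 inf_le_right

lemma disj_mono {a b w : X} (ha : 0 ≤ a) (hab : a ≤ b) (hw : 0 ≤ w)
    (hbw : b ⊓ w = 0) : a ⊓ w = 0 :=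
  le_antisymm ((inf_le_inf_right w hab).trans hbw.le) (le_inf ha hw)

lemma disj_nsmul {v w : X} (hv : 0 ≤ v) (hw : 0 ≤ w) (h : v ⊓ w = 0) (n : ℕ) :
    (n • v) ⊓ w = 0 := by
  induction n with
  | zero => simpa using hw
  | succ n ih =>
    rw [succ_nsmul]
    exact disj_add (nsmul_nonneg hv n) hv hw ih h

/-- Disjointness is preserved under suprema. -/
lemma disj_lub {S : Set X} {p w : X} (hS : IsLUB S p) (hp : 0 ≤ p) (hw : 0 ≤ w)
    (h : ∀ s ∈ S, s ⊓ w = 0) : p ⊓ w = 0 := by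
  apply le_antisymm _ (le_inf hp hw)
  have h1 : p ≤ p - p ⊓ w := by
    apply hS.2
    intro s hs
    have h2 : s + w = s ⊔ w := by
      have := inf_add_sup s w
      rw [h s hs, zero_add] at this
      exact this.symm
    have h3 : s + w ≤ p ⊔ w := h2.le.trans (sup_le_sup_right (hS.1 hs) w)
    have h4 : p ⊔ w = p + w - p ⊓ w := by
      rw [← inf_add_sup p w]; abel
    rw [h4] at h3
    have h5 : p + w - p ⊓ w = (p - p ⊓ w) + w := by abel
    rw [h5] at h3
    exact le_of_add_le_add_right h3
  rw [le_sub_iff_add_le] at h1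
  exact (add_le_iff_nonpos_right p).1 h1

/-- Existence of the band projection. -/
lemma exists_proj
    (hdc : ∀ S : Set X, S.Nonempty → BddBelow S → BddAbove S → ∃ s, IsLUB S s)
    {v c : X} (hv : 0 ≤ v) (hc : 0 ≤ c) :
    ∃ p, 0 ≤ p ∧ IsLUB (range fun n : ℕ => c ⊓ n • v) p ∧ (c - p) ⊓ v = 0 ∧ p ≤ c := by
  obtain ⟨p, hp⟩ := hdc (range fun n : ℕ => c ⊓ n • v) ⟨_, 0, rfl⟩
    ⟨0, by rintro _ ⟨n, rfl⟩; exact le_inf hc (nsmul_nonneg hv n)⟩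
    ⟨c, by rintro _ ⟨n, rfl⟩; exact inf_le_left⟩
  have hpc : p ≤ c := hp.2 (by rintro _ ⟨n, rfl⟩; exact inf_le_left)
  refine ⟨p, ?_, hp, ?_, hpc⟩
  · exact (le_inf hc (nsmul_nonneg hv 0)).trans (hp.1 ⟨0, rfl⟩)
  · apply le_antisymm _ (le_inf (sub_nonneg.2 hpc) hv)
    have h1 : p ≤ p - (c - p) ⊓ v := by
      apply hp.2
      rintro _ ⟨n, rfl⟩
      rw [le_sub_iff_add_le]
      refine le_trans ?_ (hp.1 ⟨n + 1, rfl⟩)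
      apply le_inf
      · calc c ⊓ n • v + (c - p) ⊓ v ≤ p + (c - p) := add_le_add (hp.1 ⟨n, rfl⟩) inf_le_left
          _ = c := by abel
      · rw [succ_nsmul]
        exact add_le_add inf_le_right inf_le_right
    rw [le_sub_iff_add_le] at h1
    exact (add_le_iff_nonpos_right p).1 h1

/-- Truncation is close to the identity. -/
lemma trunc_dist (x b : X) : |x - ((x ⊓ b) ⊔ (-b))| ≤ (|x| - b) ⊔ 0 := by
  set e := (|x| - b) ⊔ 0 with he
  have he0 : 0 ≤ e := le_sup_right
  have he1 : |x| - b ≤ e := le_sup_left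
  rw [sub_le_iff_le_add] at he1
  apply abs_le'.2
  constructor
  · rw [sub_le_comm]
    refine le_trans ?_ le_sup_left
    apply le_inf
    · exact sub_le_self _ he0
    · rw [sub_le_iff_le_add, add_comm]; exact (le_abs_self x).trans he1
  · rw [neg_sub, sub_le_iff_le_add]
    apply sup_le
    · exact inf_le_left.trans (le_add_of_nonneg_left he0)
    · have h := (neg_le_abs x).trans he1
      have h2 : e + x - (-b) = e + b - (-x) := by abel
      rw [← sub_nonneg, h2, sub_nonneg]
      exact h

lemma trunc_le_aux {x x' b d : X} (hd : 0 ≤ d) (h : x ≤ d + x') :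
    ((x ⊓ b) ⊔ (-b)) ≤ d + ((x' ⊓ b) ⊔ (-b)) := by
  apply sup_le
  · rw [← sub_le_iff_le_add']
    refine le_trans ?_ le_sup_left
    apply le_inf
    · rw [sub_le_iff_le_add']; exact inf_le_left.trans h
    · exact (sub_le_self _ hd).trans inf_le_right
  · exact le_sup_right.trans (le_add_of_nonneg_left hd)

lemma trunc_lip (x x' b : X) :
    |((x ⊓ b) ⊔ (-b)) - ((x' ⊓ b) ⊔ (-b))| ≤ |x - x'| := by
  apply abs_le'.2
  rw [neg_sub, sub_le_iff_le_add, sub_le_iff_le_add]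
  constructor
  · apply trunc_le_aux (abs_nonneg _)
    rw [← sub_le_iff_le_add]; exact le_abs_self _
  · apply trunc_le_aux (abs_nonneg _)
    rw [← sub_le_iff_le_add, abs_sub_comm]; exact le_abs_self _

lemma trunc_le {x b : X} (hb : 0 ≤ b) : ((x ⊓ b) ⊔ (-b)) ≤ b :=
  sup_le inf_le_right (neg_le_self hb)

lemma trunc_bdd {x x' b : X} (hb : 0 ≤ b) :
    |((x ⊓ b) ⊔ (-b)) - ((x' ⊓ b) ⊔ (-b))| ≤ b + b := by
  have key : ∀ z z' : X, ((z ⊓ b) ⊔ (-b)) - ((z' ⊓ b) ⊔ (-b)) ≤ b + b := by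
    intro z z'
    rw [sub_eq_add_neg]
    exact add_le_add (trunc_le hb) (neg_le.1 le_sup_right)
  apply abs_le'.2
  rw [neg_sub]
  exact ⟨key _ _, key _ _⟩

/-- Unfolding of the uo-Cauchy property. -/
lemma uoCauchy_spec {Γ : Type*} [Preorder Γ] [IsDirected Γ (· ≤ ·)] {x : Γ → X}
    (hx : UoCauchy x) {u : X} (hu : 0 ≤ u) :
    ∃ A : Set X, A.Nonempty ∧ IsGLB A 0 ∧
      ∀ a ∈ A, ∃ α₀ : Γ, ∀ α β, α₀ ≤ α → α₀ ≤ β → |x α - x β| ⊓ u ≤ a := by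
  obtain ⟨A, hne, -, hglb, h⟩ := hx u hu
  refine ⟨A, hne, hglb, fun a ha => ?_⟩
  obtain ⟨⟨p, q⟩, hpq⟩ := h a ha
  obtain ⟨r, hpr, hqr⟩ := exists_ge_ge p q
  refine ⟨r, fun α β hα hβ => ?_⟩
  have := hpq (α, β) ⟨hpr.trans hα, hqr.trans hβ⟩
  simp only [sub_zero] at this
  exact (le_abs_self _).trans this

/-- Local eventual boundedness of a uo-Cauchy net. -/
lemma local_bdd {Γ : Type*} [Preorder Γ] [IsDirected Γ (· ≤ ·)] {x : Γ → X}
    (hx : UoCauchy x) {u : X} (hu : 0 ≤ u) (hu0 : u ≠ 0) :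
    ∃ v, 0 ≤ v ∧ v ≠ 0 ∧ v ≤ u ∧ ∃ c, 0 ≤ c ∧ ∃ α₀ : Γ, ∀ α, α₀ ≤ α →
      ((|x α| - c) ⊔ 0) ⊓ v = 0 := by
  obtain ⟨A, hne, hglb, h⟩ := uoCauchy_spec hx hu
  have : ∃ a ∈ A, ¬ u ≤ a := by
    by_contra! hcon
    exact hu0 (le_antisymm (hglb.2 hcon) hu)
  obtain ⟨a, ha, hua⟩ := this
  have ha0 : 0 ≤ a := hglb.1 ha
  obtain ⟨α₀, h0⟩ := h a ha
  refine ⟨(u - a) ⊔ 0, le_sup_right, ?_, sup_le (sub_le_self _ ha0) hu,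
    |x α₀| + a, add_nonneg (abs_nonneg _) ha0, α₀, fun α hα => ?_⟩
  · intro h1
    exact hua (sub_nonpos.1 (h1 ▸ le_sup_left))
  · have h1 := h0 α α₀ hα le_rfl
    have h2 : |x α| - (|x α₀| + a) ≤ |x α - x α₀| - a := by
      have h3 : |x α| ≤ |x α - x α₀| + |x α₀| := by
        have := abs_add_le (x α - x α₀) (x α₀)
        rwa [sub_add_cancel] at this
      rw [sub_le_iff_le_add]
      refine h3.trans_eq ?_
      abel
    have h4 : ((|x α - x α₀| - a) ⊔ 0) ⊓ ((u - a) ⊔ 0) = 0 := by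
      have hdl : ((|x α - x α₀| - a) ⊔ 0) ⊓ ((u - a) ⊔ 0)
          = ((|x α - x α₀| - a) ⊓ (u - a)) ⊔ 0 := by
        let _ := AddCommGroup.toDistribLattice X
        exact (sup_inf_right _ _ _).symm
      rw [hdl]
      apply sup_eq_right.2
      refine le_trans ?_ (sub_nonpos.2 h1)
      rw [le_sub_iff_add_le]
      exact le_inf (by rw [← le_sub_iff_add_le]; exact inf_le_left)
        (by rw [← le_sub_iff_add_le]; exact inf_le_right)
    exact disj_mono le_sup_right (sup_le_sup_right h2 0) le_sup_right h4

end Helpers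

/-- A universally complete vector lattice with the countable sup property
is uo-complete: every uo-Cauchy net uo-converges to some element. -/
theorem stmt7 {X : Type*} [Lattice X] [AddCommGroup X]
    [CovariantClass X X (· + ·) (· ≤ ·)] [Module ℝ X] [PosSMulMono ℝ X]
    (harch : VLArchimedean X)
    -- `X` is order complete:
    (hdc : ∀ S : Set X, S.Nonempty → BddBelow S → BddAbove S → ∃ s, IsLUB S s)
    -- `X` is laterally complete:
    (hlat : ∀ A : Set X, A.Nonempty → (∀ a ∈ A, 0 ≤ a) →
      A.Pairwise (fun a b => a ⊓ b = 0) → ∃ s, IsLUB A s)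
    -- `X` has the countable sup property:
    (hcsp : ∀ (A : Set X) (s : X), IsLUB A s → ∃ C ⊆ A, C.Countable ∧ IsLUB C s)
    {Γ : Type*} [Preorder Γ] [IsDirected Γ (· ≤ ·)] [Nonempty Γ]
    (x : Γ → X) (hx : UoCauchy x) :
    ∃ l, UoTendsto x l := by
  -- a maximal disjoint family of good elements
  obtain ⟨V, hV⟩ := zorn_subset
    {V : Set X | (∀ v ∈ V, 0 ≤ v ∧ v ≠ 0 ∧ ∃ c, 0 ≤ c ∧ ∃ α₀ : Γ, ∀ α, α₀ ≤ α →
      ((|x α| - c) ⊔ 0) ⊓ v = 0) ∧ V.Pairwise (fun a b => a ⊓ b = 0)} (by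
      intro C hC hchain
      refine ⟨⋃₀ C, ⟨?_, ?_⟩, fun s hs => subset_sUnion_of_mem hs⟩
      · rintro v ⟨s, hs, hv⟩
        exact (hC hs).1 v hv
      · exact (pairwise_sUnion hchain.directedOn).2 fun s hs => (hC hs).2)
  obtain ⟨hVg, hVd⟩ := hV.prop
  have hmax : ∀ u, 0 ≤ u → (∀ v ∈ V, u ⊓ v = 0) → u = 0 := by
    intro u hu huV
    by_contra hu0
    obtain ⟨v', hv'0, hv'ne, hv'u, hgood⟩ := local_bdd hx hu hu0
    have hd : ∀ v ∈ V, v' ⊓ v = 0 := fun v hv =>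
      disj_mono hv'0 hv'u (hVg v hv).1 (huV v hv)
    have hmem : v' ∈ V := by
      refine hV.le_of_ge (y := insert v' V) ⟨?_, ?_⟩ (subset_insert _ _) (mem_insert _ _)
      · rintro v (rfl | hv)
        · exact ⟨hv'0, hv'ne, hgood⟩
        · exact hVg v hv
      · refine hVd.insert fun v hv _ => ⟨hd v hv, ?_⟩
        rw [inf_comm]; exact hd v hv
    have := hd v' hmem
    rw [inf_idem] at this
    exact hv'ne this
  -- the projected bounds
  have hproj : ∀ v : V, ∃ p, 0 ≤ p ∧ (∀ w, 0 ≤ w → (v : X) ⊓ w = 0 → p ⊓ w = 0) ∧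
      ∃ α₀ : Γ, ∀ α, α₀ ≤ α → ((|x α| - p) ⊔ 0) ⊓ (v : X) = 0 := by
    rintro ⟨v, hv⟩
    obtain ⟨hv0, -, c, hc, α₀, hα⟩ := hVg v hv
    obtain ⟨p, hp0, hp, hpv, hpc⟩ := exists_proj hdc hv0 hc
    refine ⟨p, hp0, fun w hw hvw => ?_, α₀, fun α h => ?_⟩
    · apply disj_lub hp hp0 hw
      rintro _ ⟨n, rfl⟩
      exact disj_mono (le_inf hc (nsmul_nonneg hv0 n)) inf_le_right hw
        (disj_nsmul hv0 hw hvw n)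
    · have h1 := disj_add le_sup_right (sub_nonneg.2 hpc) hv0 (hα α h) hpv
      refine disj_mono le_sup_right (sup_le ?_ ?_) hv0 h1
      · calc |x α| - p = (|x α| - c) + (c - p) := by abel
          _ ≤ _ := add_le_add le_sup_left le_rfl
      · exact add_nonneg le_sup_right (sub_nonneg.2 hpc)
  choose p hp0 hpd hpb using hproj
  have hpp : ∀ v w : V, v ≠ w → p v ⊓ p w = 0 := by
    intro v w hvw
    apply hpd v _ (hp0 w)
    rw [inf_comm]
    apply hpd w _ (hVg v v.2).1
    exact hVd w.2 v.2 (fun h => hvw (Subtype.ext h.symm))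
  obtain ⟨b, hb⟩ := hlat (insert 0 (range p)) (insert_nonempty _ _)
    (by rintro a (rfl | ⟨v, rfl⟩); exacts [le_rfl, hp0 v])
    (by
      rintro a (rfl | ⟨v, rfl⟩) a' (rfl | ⟨w, rfl⟩) hne
      · exact inf_idem _
      · exact inf_eq_left.2 (hp0 w)
      · exact inf_eq_right.2 (hp0 v)
      · exact hpp v w (fun h => hne (h ▸ rfl)))
  have hb0 : 0 ≤ b := hb.1 (mem_insert _ _)
  have hbV : ∀ v ∈ V, ∃ α₀ : Γ, ∀ α, α₀ ≤ α → ((|x α| - b) ⊔ 0) ⊓ v = 0 := by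
    intro v hv
    obtain ⟨α₀, hα⟩ := hpb ⟨v, hv⟩
    refine ⟨α₀, fun α h => disj_mono le_sup_right (sup_le_sup_right ?_ 0) (hVg v hv).1 (hα α h)⟩
    exact sub_le_sub_left (hb.1 (mem_insert_of_mem _ ⟨_, rfl⟩)) _
  -- the truncated net order converges
  obtain ⟨A, hAne, hAglb, hA⟩ := uoCauchy_spec hx (add_nonneg hb0 hb0)
  set t : Γ → X := fun α => (x α ⊓ b) ⊔ (-b) with ht
  have hdist : ∀ a ∈ A, ∃ α₀ : Γ, ∀ α β, α₀ ≤ α → α₀ ≤ β → t α - t β ≤ a := by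
    intro a ha
    obtain ⟨α₀, h⟩ := hA a ha
    refine ⟨α₀, fun α β hα hβ => (le_abs_self _).trans (le_trans ?_ (h α β hα hβ))⟩
    exact le_inf (trunc_lip _ _ _) (trunc_bdd hb0)
  obtain ⟨l, hl⟩ := hdc {z : X | ∃ α₀ : Γ, ∀ α, α₀ ≤ α → z ≤ t α ∧ -b ≤ z}
    ⟨-b, Classical.arbitrary Γ, fun α _ => ⟨le_sup_right, le_rfl⟩⟩
    ⟨-b, by rintro z ⟨α₀, h⟩; exact (h α₀ le_rfl).2⟩
    ⟨b, by rintro z ⟨α₀, h⟩; exact (h α₀ le_rfl).1.trans (trunc_le hb0)⟩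
  have htl : ∀ a ∈ A, ∃ α₀ : Γ, ∀ α, α₀ ≤ α → |t α - l| ≤ a := by
    intro a ha
    have ha0 : 0 ≤ a := hAglb.1 ha
    obtain ⟨α₀, h⟩ := hdist a ha
    refine ⟨α₀, fun α hα => ?_⟩
    apply abs_le'.2
    constructor
    · rw [sub_le_comm]
      refine le_trans (le_sup_left (b := -b)) (hl.1 ⟨α₀, fun β hβ => ⟨sup_le ?_ ?_, le_sup_right⟩⟩)
      · exact sub_le_comm.1 (h α β hα hβ)
      · exact le_sup_right
    · rw [neg_sub, sub_le_iff_le_add]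
      apply hl.2
      rintro z ⟨α₁, hz⟩
      obtain ⟨β, hβ0, hβ1⟩ := exists_ge_ge α₀ α₁
      exact (hz β hβ1).1.trans (sub_le_iff_le_add.1 (h β α hβ0 hα))
  refine ⟨l, fun y hy => ?_⟩
  have hf0 : ∀ α, 0 ≤ |x α - l| ⊓ y := fun α => le_inf (abs_nonneg _) hy
  refine ⟨{a | ∃ α₀ : Γ, ∀ α, α₀ ≤ α → |x α - l| ⊓ y ≤ a}, ?_, ?_, ⟨?_, ?_⟩, ?_⟩
  · exact ⟨y, Classical.arbitrary Γ, fun α _ => inf_le_right⟩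
  · rintro a ⟨α, hα⟩ a' ⟨α', hα'⟩
    obtain ⟨β, hβ, hβ'⟩ := exists_ge_ge α α'
    exact ⟨a ⊓ a', ⟨β, fun γ hγ => le_inf (hα γ (hβ.trans hγ)) (hα' γ (hβ'.trans hγ))⟩,
      inf_le_left, inf_le_right⟩
  · rintro a ⟨α, hα⟩
    exact (hf0 α).trans (hα α le_rfl)
  · intro w hw
    refine (le_sup_left (b := 0)).trans (hmax (w ⊔ 0) le_sup_right ?_).le
    intro v hv
    have hv0 := (hVg v hv).1
    refine le_antisymm (hAglb.2 ?_) (le_inf le_sup_right hv0)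
    intro a ha
    have ha0 : 0 ≤ a := hAglb.1 ha
    obtain ⟨α₀, h0⟩ := hbV v hv
    obtain ⟨α₁, h1⟩ := htl a ha
    obtain ⟨β, hβ0, hβ1⟩ := exists_ge_ge α₀ α₁
    have hloc : ∀ α, β ≤ α → ((|x α - l| ⊓ y - a) ⊔ 0) ⊓ v = 0 := by
      intro α hα
      refine disj_mono le_sup_right (sup_le ?_ le_sup_right) hv0 (h0 α (hβ0.trans hα))
      rw [sub_le_iff_le_add]
      refine inf_le_left.trans ?_
      calc |x α - l| = |(x α - t α) + (t α - l)| := by rw [sub_add_sub_cancel]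
        _ ≤ |x α - t α| + |t α - l| := abs_add_le _ _
        _ ≤ _ := add_le_add (trunc_dist _ _) (h1 α (hβ1.trans hα))
    obtain ⟨s, hs⟩ := hdc (Set.image (fun α => (|x α - l| ⊓ y - a) ⊔ 0) {α | β ≤ α})
      ⟨_, β, le_refl β, rfl⟩ ⟨0, by rintro _ ⟨α, -, rfl⟩; exact le_sup_right⟩
      ⟨y, by
        rintro _ ⟨α, -, rfl⟩
        exact sup_le ((sub_le_self _ ha0).trans inf_le_right) hy⟩
    have hs0 : 0 ≤ s := le_sup_right.trans (hs.1 ⟨β, le_refl β, rfl⟩)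
    have hsv : s ⊓ v = 0 := disj_lub hs hs0 hv0 (by rintro _ ⟨α, hα, rfl⟩; exact hloc α hα)
    have hwsa : w ⊔ 0 ≤ s + a := by
      apply sup_le _ (add_nonneg hs0 ha0)
      apply hw
      refine ⟨β, fun α hα => ?_⟩
      rw [← sub_le_iff_le_add]
      exact le_sup_left.trans (hs.1 ⟨α, hα, rfl⟩)
    rw [← sub_nonpos]
    refine le_trans ?_ hsv.le
    apply le_inf
    · rw [sub_le_iff_le_add]; exact inf_le_left.trans hwsa
    · exact (sub_le_self _ ha0).trans inf_le_right
  · rintro a ⟨α₀, h⟩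
    refine ⟨α₀, fun α hα => ?_⟩
    simp only [sub_zero]
    rw [abs_of_nonneg (hf0 α)]
    exact h α hα
end

section
/- Let X be a vector lattice with a weak unit u > 0 which has the countable sup property. Then the universal completion X^u of X also has the countable sup property. -/
open Filter Set

theorem aux_zorn {X : Type*} [Lattice X] [Zero X] (B N : Set X) (hN : N ⊆ B)
    (hNd : N.Pairwise (fun a b => a ⊓ b = 0)) :
    ∃ M, N ⊆ M ∧ M ⊆ B ∧ M.Pairwise (fun a b => a ⊓ b = 0) ∧
      ∀ w ∈ B, (∀ m ∈ M, w ⊓ m = 0) → w ∈ M := by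
  obtain ⟨M, hNM, hM⟩ := zorn_subset_nonempty
    {M : Set X | M ⊆ B ∧ M.Pairwise (fun a b => a ⊓ b = 0)} (by
      intro c hc hchain _
      refine ⟨⋃₀ c, ⟨?_, ?_⟩, fun s hs => subset_sUnion_of_mem hs⟩
      · exact sUnion_subset fun s hs => (hc hs).1
      · exact (pairwise_sUnion hchain.directedOn).2 fun s hs => (hc hs).2) N ⟨hN, hNd⟩
  refine ⟨M, hNM, hM.prop.1, hM.prop.2, ?_⟩
  intro w hw hwM
  have h2 : insert w M ∈ {M : Set X | M ⊆ B ∧ M.Pairwise (fun a b => a ⊓ b = 0)} := by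
    refine ⟨insert_subset hw hM.prop.1, ?_⟩
    refine hM.prop.2.insert ?_
    intro b hb _
    exact ⟨hwM b hb, by rw [inf_comm]; exact hwM b hb⟩
  exact hM.le_of_ge h2 (subset_insert w M) (mem_insert w M)

theorem aux_inf_nsmul_s8 {X : Type*} [Lattice X] [AddCommGroup X] [IsOrderedAddMonoid X]
    (a b : X) (ha : 0 ≤ a) (hb : 0 ≤ b) (h : a ⊓ b = 0) (n : ℕ) : a ⊓ n • b = 0 := by
  induction n with
  | zero => simpa using ha
  | succ n ih =>
    have hnb : 0 ≤ n • b := nsmul_nonneg hb n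
    apply le_antisymm
    · have h1 : a ⊓ (n • b) + a ⊓ b = 0 := by rw [ih, h, add_zero]
      rw [← h1, add_inf, inf_add, inf_add, succ_nsmul]
      refine le_inf (le_inf ?_ ?_) (le_inf ?_ ?_)
      · exact inf_le_left.trans (le_add_of_nonneg_left ha)
      · exact inf_le_left.trans (le_add_of_nonneg_left hnb)
      · exact inf_le_left.trans (le_add_of_nonneg_right hb)
      · exact inf_le_right
    · exact le_inf ha (nsmul_nonneg hb _)

theorem aux_cccX {X : Type*} [Lattice X] [AddCommGroup X] [IsOrderedAddMonoid X]
    (harchX : VLArchimedean X)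
    (u : X) (hu : 0 < u) (huweak : ∀ x : X, 0 ≤ x → x ⊓ u = 0 → x = 0)
    (hcspX : ∀ (A : Set X) (s : X), IsLUB A s → ∃ C ⊆ A, C.Countable ∧ IsLUB C s)
    (N : Set X) (hN : ∀ x ∈ N, 0 < x) (hNd : N.Pairwise (fun a b => a ⊓ b = 0)) :
    N.Countable := by
  obtain ⟨M, hNM, hMB, hMd, hMmax⟩ := aux_zorn {x : X | 0 < x} N hN hNd
  have hlub : IsLUB {a : X | ∃ m ∈ M, ∃ n : ℕ, a = u ⊓ n • m} u := by
    constructor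
    · rintro a ⟨m, hm, n, rfl⟩
      exact inf_le_left
    · intro v hv
      have hw0 : 0 ≤ u - u ⊓ v := sub_nonneg.2 inf_le_left
      have key : ∀ m ∈ M, (u - u ⊓ v) ⊓ m = 0 := by
        intro m hm
        have hm0 : 0 < m := hMB hm
        have hp0 : 0 ≤ (u - u ⊓ v) ⊓ m := le_inf hw0 hm0.le
        refine harchX _ (u ⊓ v) hp0 ?_
        intro n
        induction n with
        | zero =>
          rw [zero_nsmul]
          refine le_inf hu.le ?_
          have := hv ⟨m, hm, 0, rfl⟩
          simpa [hu.le] using this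
        | succ n ih =>
          have h1 : (n + 1) • ((u - u ⊓ v) ⊓ m) ≤ u := by
            rw [succ_nsmul]
            calc _ ≤ u ⊓ v + (u - u ⊓ v) := add_le_add ih inf_le_left
              _ = u := by abel
          have h2 : (n + 1) • ((u - u ⊓ v) ⊓ m) ≤ (n + 1) • m :=
            nsmul_le_nsmul_right inf_le_right _
          exact le_inf h1 ((le_inf h1 h2).trans (hv ⟨m, hm, n + 1, rfl⟩))
      by_contra hcon
      have hne : u - u ⊓ v ≠ 0 := by
        intro h
        have h3 : u = u ⊓ v := sub_eq_zero.1 h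
        exact hcon (h3 ▸ inf_le_right)
      have hmem := hMmax (u - u ⊓ v) (lt_of_le_of_ne hw0 hne.symm) key
      have := key _ hmem
      rw [inf_idem] at this
      exact hne this
  obtain ⟨C, hCA, hCc, hC⟩ := hcspX _ _ hlub
  have hCA2 : ∀ a ∈ C, ∃ m ∈ M, ∃ n : ℕ, a = u ⊓ n • m := fun a ha => hCA ha
  choose! f hf g hg using hCA2
  refine ((hCc.image f).mono ?_ : M.Countable).mono hNM
  intro m0 hm0
  by_contra hnot
  have hm0p : 0 < m0 := hMB hm0
  have hub : u - m0 ⊓ u ∈ upperBounds C := by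
    intro a ha
    have hne : m0 ≠ f a := fun h => hnot ⟨a, ha, h.symm⟩
    have hd := aux_inf_nsmul_s8 m0 (f a) hm0p.le (le_of_lt (hMB (hf a ha))) (hMd hm0 (hf a ha) hne) (g a)
    have ha0 : 0 ≤ a := by
      rw [hg a ha]
      exact le_inf hu.le (nsmul_nonneg (le_of_lt (hMB (hf a ha))) _)
    have hau : a ≤ u := hC.1 ha
    have hd2 : a ⊓ (m0 ⊓ u) = 0 := by
      apply le_antisymm
      · rw [← hd]
        refine le_inf (inf_le_right.trans inf_le_left) (inf_le_left.trans ?_)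
        conv_lhs => rw [hg a ha]
        exact inf_le_right
      · exact le_inf ha0 (le_inf hm0p.le hu.le)
    have hsum := inf_add_sup a (m0 ⊓ u)
    rw [hd2, zero_add] at hsum
    rw [le_sub_iff_add_le, ← hsum]
    exact sup_le hau inf_le_right
  have h4 := hC.2 hub
  have h5 : m0 ⊓ u ≤ 0 := by simpa using h4
  exact hm0p.ne' (huweak m0 hm0p.le (le_antisymm h5 (le_inf hm0p.le hu.le)))

theorem aux_pos_inf {Y : Type*} [Lattice Y] [AddCommGroup Y] [IsOrderedAddMonoid Y] (x : Y) :
    (x ⊔ 0) ⊓ (-x ⊔ 0) = 0 := by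
  have h1 : (-x ⊔ 0) = (x ⊔ 0) - x := by
    rw [sup_sub, sub_self, zero_sub, sup_comm]
  have h := inf_add_sup (x ⊔ 0) (-x ⊔ 0)
  apply le_antisymm _ (le_inf le_sup_right le_sup_right)
  have h2 : (x ⊔ 0) ⊓ (-x ⊔ 0) - (x ⊔ 0) = (-x) ⊓ 0 ⊔ (-x) ⊓ 0 := by
    rw [inf_sub, h1, sub_self, sup_idem, inf_comm]
    congr 1
    abel
  rw [sup_idem] at h2
  have h3 : (-x) ⊓ 0 = -(x ⊔ 0) := by rw [neg_sup, neg_zero]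
  rw [h3, sub_eq_iff_eq_add] at h2
  rw [h2]; simp

theorem aux_cspY {Y : Type*} [Lattice Y] [AddCommGroup Y] [IsOrderedAddMonoid Y]
    [Module ℝ Y] [PosSMulMono ℝ Y] (harchY : VLArchimedean Y)
    (e : Y) (he : 0 < e) (heweak : ∀ x : Y, 0 ≤ x → x ⊓ e = 0 → x = 0)
    (hccc : ∀ N : Set Y, (∀ x ∈ N, 0 < x) → N.Pairwise (fun a b => a ⊓ b = 0) → N.Countable)
    (A : Set Y) (s : Y) (hA : IsLUB A s) : ∃ C ⊆ A, C.Countable ∧ IsLUB C s := by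
  let r : ℕ → ℝ := fun n => ((n : ℝ) + 1)⁻¹
  have hr : ∀ n, 0 ≤ r n := fun n => by positivity
  have hrn : ∀ n (x : Y), (n + 1) • (r n • x) = x := by
    intro n x
    rw [← Nat.cast_smul_eq_nsmul ℝ, smul_smul]
    have : ((n + 1 : ℕ) : ℝ) * r n = 1 := by
      push_cast
      exact mul_inv_cancel₀ (by positivity)
    rw [this, one_smul]
  have hsn : ∀ n (x : Y), 0 ≤ x → 0 ≤ r n • x := fun n x hx => smul_nonneg (hr n) hx
  let B : ℕ → Set Y := fun n => {w | 0 < w ∧ ∃ a ∈ A, w ⊓ ((s - a - r n • e) ⊔ 0) = 0}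
  have hB : ∀ n (z : Y), 0 < z → ∃ w ∈ B n, w ≤ z := by
    intro n z hz
    by_contra hcon
    push Not at hcon
    have hz1 : 0 ≤ z ⊓ e := le_inf hz.le he.le
    have hz0 : 0 ≤ r n • (z ⊓ e) := hsn n _ hz1
    have hle1 : r n • (z ⊓ e) ≤ z := by
      calc r n • (z ⊓ e) ≤ (n + 1) • (r n • (z ⊓ e)) := by
            rw [succ_nsmul]; exact le_add_of_nonneg_left (nsmul_nonneg hz0 n)
        _ = z ⊓ e := hrn _ _
        _ ≤ z := inf_le_left
    have hle2 : r n • (z ⊓ e) ≤ r n • e := smul_le_smul_of_nonneg_left inf_le_right (hr n)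
    have hub : s - r n • (z ⊓ e) ∈ upperBounds A := by
      intro a ha
      have hzero : (-(s - a - r n • e) ⊔ 0) ⊓ z = 0 := by
        by_contra hne
        have hnn : 0 ≤ (-(s - a - r n • e) ⊔ 0) ⊓ z := le_inf le_sup_right hz.le
        refine hcon _ ⟨lt_of_le_of_ne hnn (Ne.symm hne), a, ha, ?_⟩ inf_le_right
        apply le_antisymm _ (le_inf hnn le_sup_right)
        refine le_trans ?_ (aux_pos_inf (s - a - r n • e)).le
        exact le_inf inf_le_right (inf_le_left.trans inf_le_left)
      have has : a ≤ s := hA.1 ha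
      have h1 : (a - s + r n • (z ⊓ e)) ⊔ 0 ≤ (-(s - a - r n • e) ⊔ 0) ⊓ z := by
        refine sup_le (le_inf ?_ ?_) (le_inf le_sup_right hz.le)
        · refine le_trans ?_ le_sup_left
          calc a - s + r n • (z ⊓ e) ≤ a - s + r n • e := add_le_add_right hle2 _
            _ = _ := by abel
        · calc a - s + r n • (z ⊓ e) ≤ 0 + r n • (z ⊓ e) :=
                add_le_add_left (sub_nonpos.2 has) _
            _ ≤ z := by rw [zero_add]; exact hle1
      rw [hzero] at h1
      have h2 := le_sup_left.trans h1
      have h3 : a - (s - r n • (z ⊓ e)) ≤ 0 := by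
        calc _ = a - s + r n • (z ⊓ e) := by abel
          _ ≤ 0 := h2
      exact sub_nonpos.1 h3
    have h4 := hA.2 hub
    have h5 : r n • (z ⊓ e) ≤ 0 := by simpa using h4
    have h6 : r n • (z ⊓ e) = 0 := le_antisymm h5 hz0
    have h7 := hrn n (z ⊓ e)
    rw [h6, smul_zero] at h7
    exact hz.ne' (heweak z hz.le h7.symm)
  have hM := fun n => aux_zorn (B n) ∅ (empty_subset _) (pairwise_empty _)
  choose M _ hMB hMd hMmax using hM
  have hMc : ∀ n, (M n).Countable := fun n => hccc (M n) (fun x hx => (hMB n hx).1) (hMd n)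
  have hex : ∀ n w, w ∈ M n → ∃ a ∈ A, w ⊓ ((s - a - r n • e) ⊔ 0) = 0 :=
    fun n w hw => (hMB n hw).2
  choose! f hfA hf using hex
  refine ⟨⋃ n, f n '' M n, ?_, countable_iUnion fun n => (hMc n).image _, ?_, ?_⟩
  · rintro a ha
    obtain ⟨n, w, hw, rfl⟩ := mem_iUnion.1 ha
    exact hfA n w hw
  · rintro a ha
    obtain ⟨n, w, hw, rfl⟩ := mem_iUnion.1 ha
    exact hA.1 (hfA n w hw)
  · intro v hv
    have ht0 : 0 ≤ s - v ⊓ s := sub_nonneg.2 inf_le_right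
    have hte : ∀ n, s - v ⊓ s ≤ r n • e := by
      intro n
      have hdis : ∀ m ∈ M n, m ⊓ ((s - v ⊓ s - r n • e) ⊔ 0) = 0 := by
        intro m hm
        apply le_antisymm _ (le_inf (hMB n hm).1.le le_sup_right)
        refine le_trans ?_ (hf n m hm).le
        refine inf_le_inf_left _ (sup_le_sup_right (sub_le_sub_right (sub_le_sub_left ?_ _) _) _)
        exact le_inf (hv (mem_iUnion.2 ⟨n, m, hm, rfl⟩)) (hA.1 (hfA n m hm))
      have hz : (s - v ⊓ s - r n • e) ⊔ 0 = 0 := by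
        by_contra hne
        obtain ⟨w, hwB, hwz⟩ := hB n _ (lt_of_le_of_ne le_sup_right (Ne.symm hne))
        have hw0 : 0 < w := hwB.1
        have hwd : ∀ m ∈ M n, w ⊓ m = 0 := by
          intro m hm
          apply le_antisymm _ (le_inf hw0.le (hMB n hm).1.le)
          refine le_trans ?_ (hdis m hm).le
          exact le_inf inf_le_right (inf_le_left.trans hwz)
        have := hwd w (hMmax n w hwB hwd)
        rw [inf_idem] at this
        exact hw0.ne' this
      exact sub_nonpos.1 (le_sup_left.trans hz.le)
    have ht : s - v ⊓ s = 0 := by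
      refine harchY _ e ht0 fun n => ?_
      calc n • (s - v ⊓ s) ≤ (n + 1) • (s - v ⊓ s) := by
            rw [succ_nsmul]; exact le_add_of_nonneg_right ht0
        _ ≤ (n + 1) • (r n • e) := nsmul_le_nsmul_right (hte n) _
        _ = e := hrn n e
    have h3 : s = v ⊓ s := sub_eq_zero.1 ht
    exact h3.le.trans inf_le_left

/-- If a vector lattice `X` with a weak unit `u > 0` has the countable sup
property, then its universal completion `Xᵘ` (here: any universally complete vector lattice
`Y` containing `X` as an order dense sublattice, via a lattice embedding `ι`) also has the
countable sup property. -/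
theorem stmt8 {X Y : Type*}
    [Lattice X] [AddCommGroup X] [CovariantClass X X (· + ·) (· ≤ ·)]
    [Module ℝ X] [PosSMulMono ℝ X]
    [Lattice Y] [AddCommGroup Y] [CovariantClass Y Y (· + ·) (· ≤ ·)]
    [Module ℝ Y] [PosSMulMono ℝ Y]
    (harchX : VLArchimedean X) (harchY : VLArchimedean Y)
    -- `ι` embeds `X` into `Y` as a sublattice:
    (ι : X →ₗ[ℝ] Y) (hinj : Function.Injective ι)
    (hlatt : ∀ a b : X, ι (a ⊔ b) = ι a ⊔ ι b)
    -- `X` is order dense in `Y`: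
    (hdense : ∀ z : Y, 0 < z → ∃ x : X, 0 < ι x ∧ ι x ≤ z)
    -- `Y` is order complete:
    (hYdc : ∀ S : Set Y, S.Nonempty → BddBelow S → BddAbove S → ∃ s, IsLUB S s)
    -- `Y` is laterally complete:
    (hYlat : ∀ A : Set Y, A.Nonempty → (∀ a ∈ A, 0 ≤ a) →
      A.Pairwise (fun a b => a ⊓ b = 0) → ∃ s, IsLUB A s)
    -- `u` is a weak unit of `X`:
    (u : X) (hu : 0 < u) (huweak : ∀ x : X, 0 ≤ x → x ⊓ u = 0 → x = 0)
    -- `X` has the countable sup property: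
    (hcspX : ∀ (A : Set X) (s : X), IsLUB A s → ∃ C ⊆ A, C.Countable ∧ IsLUB C s) :
    -- then `Y` has the countable sup property:
    ∀ (A : Set Y) (s : Y), IsLUB A s → ∃ C ⊆ A, C.Countable ∧ IsLUB C s := by
  have : IsOrderedAddMonoid X :=
    { add_le_add_left := fun a b h c => by
        rw [add_comm a c, add_comm b c]; exact CovariantClass.elim c h }
  have : IsOrderedAddMonoid Y :=
    { add_le_add_left := fun a b h c => by
        rw [add_comm a c, add_comm b c]; exact CovariantClass.elim c h }
  have hinf : ∀ a b : X, ι (a ⊓ b) = ι a ⊓ ι b := by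
    intro a b
    have h1 : ι (a ⊓ b) + ι (a ⊔ b) = ι a + ι b := by
      rw [← map_add, inf_add_sup, map_add]
    rw [hlatt, ← inf_add_sup (ι a) (ι b)] at h1
    exact add_right_cancel h1
  have hmono : ∀ a b : X, a ≤ b → ι a ≤ ι b := by
    intro a b h
    rw [← sup_eq_right.2 h, hlatt]
    exact le_sup_left
  have hpos : ∀ x : X, 0 < ι x → 0 < x := by
    intro x hx
    have h1 : ι (0 ⊔ x) = ι x := by
      rw [hlatt, map_zero]; exact sup_eq_right.2 hx.le
    have h2 : 0 ≤ x := sup_eq_right.1 (hinj h1)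
    refine lt_of_le_of_ne h2 ?_
    rintro rfl
    simp at hx
  have hue : 0 < ι u := by
    refine lt_of_le_of_ne (by simpa using hmono 0 u hu.le) ?_
    intro h
    exact hu.ne (hinj (by simpa using h))
  intro A s hA
  refine aux_cspY harchY (ι u) hue ?_ ?_ A s hA
  · intro z hz hzu
    by_contra hne
    obtain ⟨x, hx0, hxz⟩ := hdense z (lt_of_le_of_ne hz (Ne.symm hne))
    have hx := hpos x hx0
    refine hx.ne' (huweak x hx.le (hinj ?_))
    rw [hinf, map_zero]
    apply le_antisymm _ (le_inf hx0.le hue.le)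
    rw [← hzu]
    exact inf_le_inf_right _ hxz
  · intro N hN hNd
    choose! f hf0 hfle using hdense
    have hdis : ∀ a ∈ N, ∀ b ∈ N, a ≠ b → f a ⊓ f b = 0 := by
      intro a ha b hb hab
      apply hinj
      rw [hinf, map_zero]
      apply le_antisymm _ (le_inf (hf0 a (hN a ha)).le (hf0 b (hN b hb)).le)
      rw [← hNd ha hb hab]
      exact inf_le_inf (hfle a (hN a ha)) (hfle b (hN b hb))
    have hinjN : InjOn f N := by
      intro a ha b hb hab
      by_contra hne
      have h1 := hdis a ha b hb hne
      rw [← hab, inf_idem] at h1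
      exact (hpos _ (hf0 a (hN a ha))).ne' h1
    have hc : (f '' N).Countable := by
      refine aux_cccX harchX u hu huweak hcspX _ ?_ ?_
      · rintro _ ⟨a, ha, rfl⟩
        exact hpos _ (hf0 a (hN a ha))
      · rintro _ ⟨a, ha, rfl⟩ _ ⟨b, hb, rfl⟩ hab
        exact hdis a ha b hb (fun h => hab (by rw [h]))
    exact countable_of_injective_of_countable_image hinjN hc
end

section
/- Let X be a vector lattice and let D be a maximal collection of pairwise disjoint nonzero positive vectors in X. Suppose that for each d ∈ D the band B_d generated by d in X has the countable sup property. Then the universal completion X^u is uo-complete, and every uo-Cauchy net in X uo-converges in X^u. -/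
open Filter Set

/-- The band generated by an element `x`: the smallest band containing `x`. -/
def bandGen {X : Type*} [Lattice X] [AddCommGroup X] [Module ℝ X] (x : X) : Set X :=
  ⋂₀ {B : Set X | IsBand B ∧ x ∈ B}

/-- `s` is the least upper bound of `A` computed within the sub-vector-lattice `S`. -/
def IsLUBWithin {X : Type*} [Preorder X] (S A : Set X) (s : X) : Prop :=
  s ∈ S ∧ s ∈ upperBounds A ∧ ∀ b ∈ S, b ∈ upperBounds A → s ≤ b

/-- The sub-vector-lattice `S` has the countable sup property. -/
def CountableSupWithin {X : Type*} [Preorder X] (S : Set X) : Prop :=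
  ∀ A ⊆ S, ∀ s : X, IsLUBWithin S A s → ∃ C ⊆ A, C.Countable ∧ IsLUBWithin S C s

section Helpers

variable {Y : Type*} [Lattice Y] [AddCommGroup Y] [CovariantClass Y Y (· + ·) (· ≤ ·)]

theorem h_inf_sup (a b c : Y) : a ⊓ b ⊔ c = (a ⊔ c) ⊓ (b ⊔ c) :=
  @sup_inf_right Y (AddCommGroup.toDistribLattice Y) a b c

theorem h_sup_inf (a b c : Y) : (a ⊔ b) ⊓ c = (a ⊓ c) ⊔ (b ⊓ c) :=
  @inf_sup_right Y (AddCommGroup.toDistribLattice Y) a b c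

/-- Infinite distributivity. -/
theorem h_lub_inf {S : Set Y} {s u c : Y} (hs : IsLUB S s) (h : ∀ x ∈ S, x ⊓ u ≤ c) :
    s ⊓ u ≤ c := by
  have h1 : s ≤ c + (s ⊔ u) - u := by
    apply hs.2
    intro x hx
    rw [le_sub_iff_add_le, ← inf_add_sup]
    exact add_le_add (h x hx) (sup_le_sup_right (hs.1 hx) u)
  rw [le_sub_iff_add_le, ← inf_add_sup] at h1
  exact le_of_add_le_add_right h1

theorem h_inf_add_le {p q r : Y} (hp : 0 ≤ p) (hq : 0 ≤ q) (hr : 0 ≤ r) :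
    p ⊓ (q + r) ≤ p ⊓ q + p ⊓ r := by
  rw [add_inf, inf_add, inf_add]
  refine le_inf (le_inf ?_ ?_) (le_inf ?_ ?_)
  · exact inf_le_left.trans (le_add_of_nonneg_right hp)
  · exact inf_le_left.trans (le_add_of_nonneg_left hq)
  · exact inf_le_left.trans (le_add_of_nonneg_right hr)
  · exact inf_le_right

theorem h_disj_nsmul {p q : Y} (hp : 0 ≤ p) (hq : 0 ≤ q) (h : p ⊓ q ≤ 0) (n : ℕ) :
    p ⊓ n • q ≤ 0 := by
  induction n with
  | zero => simp
  | succ k ih =>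
    rw [succ_nsmul]
    exact (h_inf_add_le hp (nsmul_nonneg hq k) hq).trans (add_nonpos ih h)

theorem h_disj_pos {p q : Y} (h : p ⊓ q ≤ 0) : (p ⊔ 0) ⊓ (q ⊔ 0) ≤ 0 := by
  rw [← h_inf_sup]; exact sup_le h le_rfl

/-- Archimedean lemma. -/
theorem h_arch (hA : VLArchimedean Y) {x b e : Y} (hb : 0 ≤ b) (he : 0 ≤ e)
    (h : ∀ n : ℕ, x ⊓ n • e ≤ b) : ((x - b) ⊔ 0) ⊓ e = 0 := by
  set w := (x - b) ⊔ 0 with hw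
  have hw0 : 0 ≤ w := le_sup_right
  set t := w ⊓ e with ht
  have ht0 : 0 ≤ t := le_inf hw0 he
  apply hA t b ht0
  intro n
  have h1 : w ⊓ ((n • e - b) ⊔ 0) ≤ 0 := by
    apply h_disj_pos
    rw [← inf_sub, sub_nonpos]
    exact h n
  have h2 : ((n • t - b) ⊔ 0) ⊓ t ≤ 0 := by
    refine le_trans ?_ h1
    refine le_inf (inf_le_right.trans inf_le_left) (inf_le_left.trans ?_)
    exact sup_le_sup_right (sub_le_sub_right (nsmul_le_nsmul_right inf_le_right n) b) 0
  have h3 := h_disj_nsmul (le_sup_right) ht0 h2 n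
  have h4 : (n • t - b) ⊔ 0 ≤ n • t :=
    sup_le (sub_le_self _ hb) (nsmul_nonneg ht0 n)
  rw [inf_eq_left.2 h4] at h3
  exact sub_nonpos.1 (le_sup_left.trans h3)

/-- Existence of a disjointness-bounded supremum. -/
theorem h_bdd (hA : VLArchimedean Y)
    (hYdc : ∀ S : Set Y, S.Nonempty → BddBelow S → BddAbove S → ∃ s, IsLUB S s)
    (hYlat : ∀ A : Set Y, A.Nonempty → (∀ a ∈ A, 0 ≤ a) →
      A.Pairwise (fun a b => a ⊓ b = 0) → ∃ s, IsLUB A s)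
    (L : Set Y) (hne : L.Nonempty) (hL0 : ∀ z ∈ L, 0 ≤ z)
    (hL : ∀ u : Y, 0 < u → ∃ e, 0 < e ∧ e ≤ u ∧ ∃ b, ∀ z ∈ L, ∀ n : ℕ, z ⊓ n • e ≤ b) :
    BddAbove L := by
  obtain ⟨E, hE⟩ := zorn_subset
    {E : Set Y | (∀ e ∈ E, 0 < e ∧ ∃ b, ∀ z ∈ L, ∀ n : ℕ, z ⊓ n • e ≤ b) ∧
      E.Pairwise (fun a b => a ⊓ b = 0)} (by
    intro c hc hchain
    refine ⟨⋃₀ c, ⟨?_, ?_⟩, fun s hs => subset_sUnion_of_mem hs⟩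
    · rintro e ⟨s, hs, he⟩
      exact (hc hs).1 e he
    · exact (pairwise_sUnion hchain.directedOn).2 fun s hs => (hc hs).2)
  obtain ⟨⟨hE1, hE2⟩, hEmax⟩ := hE
  have hmax : ∀ w : Y, 0 ≤ w → (∀ e ∈ E, w ⊓ e = 0) → w = 0 := by
    intro w hw h
    by_contra hne0
    obtain ⟨e', he', hew, hb⟩ := hL w (lt_of_le_of_ne hw (Ne.symm hne0))
    have hd : ∀ e ∈ E, e' ⊓ e = 0 := fun e he =>
      le_antisymm ((inf_le_inf_right e hew).trans (h e he).le) (le_inf he'.le (hE1 e he).1.le)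
    have hmem : e' ∈ E := by
      apply hEmax (y := insert e' E) ⟨?_, ?_⟩ (subset_insert _ _) (mem_insert _ _)
      · rintro e (rfl | he)
        · exact ⟨he', hb⟩
        · exact hE1 e he
      · refine hE2.insert fun e he _ => ⟨hd e he, ?_⟩
        rw [inf_comm]; exact hd e he
    have := hd e' hmem
    rw [inf_idem] at this
    exact he'.ne' this
  have hsup : ∀ e : Y, ∃ s, e ∈ E → IsLUB {x | ∃ z ∈ L, ∃ n : ℕ, x = z ⊓ n • e} s := by
    intro e
    by_cases he : e ∈ E
    · obtain ⟨z, hz⟩ := hne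
      obtain ⟨h0, b, hb⟩ := hE1 e he
      obtain ⟨s, hs⟩ := hYdc {x | ∃ z ∈ L, ∃ n : ℕ, x = z ⊓ n • e} ⟨_, z, hz, 0, rfl⟩
        ⟨0, by rintro x ⟨z, hz, n, rfl⟩; exact le_inf (hL0 z hz) (nsmul_nonneg h0.le n)⟩
        ⟨b, by rintro x ⟨z, hz, n, rfl⟩; exact hb z hz n⟩
      exact ⟨s, fun _ => hs⟩
    · exact ⟨0, fun h => absurd h he⟩
  choose f hf using hsup
  have hf0 : ∀ e ∈ E, 0 ≤ f e := by
    intro e he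
    obtain ⟨z, hz⟩ := hne
    refine le_trans ?_ ((hf e he).1 ⟨z, hz, 0, rfl⟩)
    simpa using hL0 z hz
  have hfd : ∀ e ∈ E, ∀ e' ∈ E, e ≠ e' → f e ⊓ f e' = 0 := by
    intro e he e' he' hne'
    refine le_antisymm ?_ (le_inf (hf0 e he) (hf0 e' he'))
    apply h_lub_inf (hf e he)
    rintro _ ⟨z, hz, n, rfl⟩
    rw [inf_comm]
    apply h_lub_inf (hf e' he')
    rintro _ ⟨z', hz', m, rfl⟩
    refine le_trans (inf_le_inf inf_le_right inf_le_right) ?_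
    have h1 : e' ⊓ e ≤ 0 := (hE2 he' he hne'.symm).le
    have h2 := h_disj_nsmul (hE1 e' he').1.le (hE1 e he).1.le h1 n
    rw [inf_comm] at h2 ⊢
    exact h_disj_nsmul (nsmul_nonneg (hE1 e he).1.le n) (hE1 e' he').1.le h2 m
  obtain ⟨b, hb⟩ := hYlat (insert 0 (f '' E)) ⟨0, mem_insert _ _⟩ (by
      rintro _ (rfl | ⟨e, he, rfl⟩)
      · exact le_rfl
      · exact hf0 e he) (by
      refine Set.Pairwise.insert ?_ ?_
      · rintro _ ⟨e, he, rfl⟩ _ ⟨e', he', rfl⟩ hn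
        exact hfd e he e' he' fun h => hn (by rw [h])
      · rintro _ ⟨e, he, rfl⟩ _
        exact ⟨inf_eq_left.2 (hf0 e he), inf_eq_right.2 (hf0 e he)⟩)
  have hb0 : 0 ≤ b := hb.1 (mem_insert _ _)
  refine ⟨b, fun z hz => ?_⟩
  have hw : (z - b) ⊔ 0 = 0 := by
    apply hmax _ le_sup_right
    intro e he
    apply h_arch hA hb0 (hE1 e he).1.le
    intro n
    exact ((hf e he).1 ⟨z, hz, n, rfl⟩).trans (hb.1 (mem_insert_of_mem _ ⟨e, he, rfl⟩))
  exact sub_nonpos.1 (le_sup_left.trans hw.le)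

theorem h_shift {p u a : Y} (h : p ⊓ u ≤ a) : ((p - a) ⊔ 0) ⊓ ((u - a) ⊔ 0) ≤ 0 := by
  apply h_disj_pos
  rw [← inf_sub, sub_nonpos]
  exact h

/-- Core: positive nets. -/
theorem h_core (hA : VLArchimedean Y)
    (hYdc : ∀ S : Set Y, S.Nonempty → BddBelow S → BddAbove S → ∃ s, IsLUB S s)
    (hYlat : ∀ A : Set Y, A.Nonempty → (∀ a ∈ A, 0 ≤ a) →
      A.Pairwise (fun a b => a ⊓ b = 0) → ∃ s, IsLUB A s)
    {Γ : Type*} [Preorder Γ] [IsDirected Γ (· ≤ ·)] [Nonempty Γ] (y : Γ → Y)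
    (hy : ∀ α, 0 ≤ y α)
    (hC : ∀ u : Y, 0 ≤ u → ∃ A : Set Y, IsGLB A 0 ∧
      ∀ a ∈ A, ∃ γ : Γ, ∀ α β, γ ≤ α → γ ≤ β → |y α - y β| ⊓ u ≤ a) :
    ∃ l, ∀ u a : Y, 0 ≤ u → 0 ≤ a → ∀ γ : Γ,
      (∀ α β, γ ≤ α → γ ≤ β → |y α - y β| ⊓ u ≤ a) →
      ∀ α, γ ≤ α → |y α - l| ⊓ u ≤ a := by
  set L : Set Y := {z | 0 ≤ z ∧ ∃ β, ∀ α, β ≤ α → z ≤ y α} with hLdef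
  have h0L : (0 : Y) ∈ L := ⟨le_rfl, Classical.arbitrary Γ, fun α _ => hy α⟩
  have hkey : ∀ u a : Y, ∀ γ : Γ, (∀ α β, γ ≤ α → γ ≤ β → |y α - y β| ⊓ u ≤ a) →
      ∀ α, γ ≤ α → ∀ z ∈ L, (z - y α) ⊓ u ≤ a := by
    rintro u a γ h α hα z ⟨_, β, hβ⟩
    obtain ⟨δ, h1, h2⟩ := exists_ge_ge γ β
    refine le_trans (inf_le_inf_right u ?_) (h δ α h1 hα)
    exact (sub_le_sub_right (hβ δ h2) _).trans (le_abs_self _)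
  have hbdd : BddAbove L := by
    apply h_bdd hA hYdc hYlat L ⟨0, h0L⟩ (fun z hz => hz.1)
    intro u hu
    obtain ⟨A, hA0, hAc⟩ := hC u hu.le
    have : ∃ a ∈ A, ¬ u ≤ a := by
      by_contra hcon
      push Not at hcon
      exact hu.not_ge (hA0.2 hcon)
    obtain ⟨a, ha, hua⟩ := this
    have ha0 : 0 ≤ a := hA0.1 ha
    obtain ⟨γ, hγ⟩ := hAc a ha
    refine ⟨(u - a) ⊔ 0, ?_, sup_le (sub_le_self _ ha0) hu.le, y γ + a, ?_⟩
    · refine lt_of_le_of_ne le_sup_right fun h => hua ?_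
      exact sub_nonpos.1 (le_sup_left.trans h.symm.le)
    · intro z hz n
      have h1 := h_shift (hkey u a γ hγ γ le_rfl z hz)
      have h2 := h_disj_nsmul le_sup_right le_sup_right h1 n
      have h3 : z ⊓ n • ((u - a) ⊔ 0) - (y γ + a) ≤ 0 := by
        refine le_trans (le_inf ?_ ?_) h2
        · refine le_trans ?_ le_sup_left
          rw [sub_sub]
          exact sub_le_sub_right inf_le_left _
        · exact (sub_le_self _ (add_nonneg (hy γ) ha0)).trans inf_le_right
      exact sub_nonpos.1 h3
  obtain ⟨l, hl⟩ := hYdc L ⟨0, h0L⟩ ⟨0, fun z hz => hz.1⟩ hbdd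
  have hl0 : 0 ≤ l := hl.1 h0L
  refine ⟨l, fun u a hu ha γ h α hα => ?_⟩
  rw [abs, h_sup_inf]
  refine sup_le ?_ ?_
  · -- (y α - l) ⊓ u ≤ a
    have hz : ∀ n : ℕ, y α ⊓ n • ((u - a) ⊔ 0) ≤ a + l := by
      intro n
      rw [add_comm, ← sub_le_iff_le_add]
      have hmem : (y α ⊓ n • ((u - a) ⊔ 0) - a) ⊔ 0 ∈ L := by
        refine ⟨le_sup_right, γ, ?_⟩
        intro β hβ
        refine sup_le ?_ (hy β)
        have h1 : (y α - y β) ⊓ u ≤ a :=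
          (inf_le_inf_right u (le_abs_self _)).trans (h α β hα hβ)
        have h2 := h_disj_nsmul le_sup_right le_sup_right (h_shift h1) n
        have h3 : y α ⊓ n • ((u - a) ⊔ 0) - (y β + a) ≤ 0 := by
          refine le_trans (le_inf ?_ ?_) h2
          · refine le_trans ?_ le_sup_left
            rw [sub_sub]
            exact sub_le_sub_right inf_le_left _
          · exact (sub_le_self _ (add_nonneg (hy β) ha)).trans inf_le_right
        rw [sub_le_iff_le_add]
        exact sub_nonpos.1 h3
      exact le_sup_left.trans (hl.1 hmem)
    have h4 := h_arch hA (add_nonneg ha hl0) le_sup_right hz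
    have h5 : (y α - l - a) ⊓ (u - a) ≤ 0 := by
      rw [sub_sub, add_comm l a]
      exact (inf_le_inf le_sup_left le_sup_left).trans h4.le
    rw [← inf_sub, sub_nonpos] at h5
    exact h5
  · rw [neg_sub]
    have hl' : IsLUB ((fun z => z - y α) '' L) (l - y α) := by
      refine ⟨?_, ?_⟩
      · rintro _ ⟨z, hz, rfl⟩
        exact sub_le_sub_right (hl.1 hz) _
      · intro c hc
        rw [sub_le_iff_le_add]
        refine hl.2 fun z hz => ?_
        rw [← sub_le_iff_le_add]
        exact hc ⟨z, hz, rfl⟩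
    apply h_lub_inf hl'
    rintro _ ⟨z, hz, rfl⟩
    exact hkey u a γ h α hα z hz

theorem h_cauchy {Γ : Type*} [Preorder Γ] [IsDirected Γ (· ≤ ·)] {y : Γ → Y}
    (hC : UoCauchy y) (u : Y) (hu : 0 ≤ u) : ∃ A : Set Y, A.Nonempty ∧ DirectedOn (· ≥ ·) A ∧
      IsGLB A 0 ∧ ∀ a ∈ A, ∃ γ : Γ, ∀ α β, γ ≤ α → γ ≤ β → |y α - y β| ⊓ u ≤ a := by
  obtain ⟨A, h1, h2, h3, h4⟩ := hC u hu
  refine ⟨A, h1, h2, h3, fun a ha => ?_⟩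
  obtain ⟨⟨γ₁, γ₂⟩, hγ⟩ := h4 a ha
  obtain ⟨γ, hg1, hg2⟩ := exists_ge_ge γ₁ γ₂
  refine ⟨γ, fun α β hα hβ => ?_⟩
  have := hγ (α, β) ⟨hg1.trans hα, hg2.trans hβ⟩
  simp only [sub_zero] at this
  exact (le_abs_self _).trans this

theorem h_posdiff (a b : Y) : |(a ⊔ 0) - (b ⊔ 0)| ≤ |a - b| := by
  rw [abs_le']
  have key : ∀ a b : Y, (a ⊔ 0) - (b ⊔ 0) ≤ |a - b| := by
    intro a b
    rw [sub_le_iff_le_add]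
    refine sup_le ?_ (add_nonneg (abs_nonneg _) le_sup_right)
    rw [← sub_le_iff_le_add]
    exact (sub_le_sub_left le_sup_left a).trans (le_abs_self _)
  refine ⟨key a b, ?_⟩
  rw [neg_sub, abs_sub_comm]
  exact key b a

theorem h_complete (hA : VLArchimedean Y)
    (hYdc : ∀ S : Set Y, S.Nonempty → BddBelow S → BddAbove S → ∃ s, IsLUB S s)
    (hYlat : ∀ A : Set Y, A.Nonempty → (∀ a ∈ A, 0 ≤ a) →
      A.Pairwise (fun a b => a ⊓ b = 0) → ∃ s, IsLUB A s)
    {Γ : Type*} [Preorder Γ] [IsDirected Γ (· ≤ ·)] [Nonempty Γ] (y : Γ → Y)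
    (hC : UoCauchy y) : ∃ l, UoTendsto y l := by
  have hneg : ∀ a b : Y, |(-a ⊔ 0) - (-b ⊔ 0)| ≤ |a - b| := by
    intro a b
    refine (h_posdiff (-a) (-b)).trans (le_of_eq ?_)
    rw [← abs_neg]; congr 1; abel
  obtain ⟨l₁, hl₁⟩ := h_core hA hYdc hYlat (fun α => y α ⊔ 0) (fun α => le_sup_right) (by
    intro u hu
    obtain ⟨A, -, -, h3, h4⟩ := h_cauchy hC u hu
    refine ⟨A, h3, fun a ha => ?_⟩
    obtain ⟨γ, hγ⟩ := h4 a ha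
    exact ⟨γ, fun α β hα hβ => (inf_le_inf_right u (h_posdiff _ _)).trans (hγ α β hα hβ)⟩)
  obtain ⟨l₂, hl₂⟩ := h_core hA hYdc hYlat (fun α => -y α ⊔ 0) (fun α => le_sup_right) (by
    intro u hu
    obtain ⟨A, -, -, h3, h4⟩ := h_cauchy hC u hu
    refine ⟨A, h3, fun a ha => ?_⟩
    obtain ⟨γ, hγ⟩ := h4 a ha
    exact ⟨γ, fun α β hα hβ => (inf_le_inf_right u (hneg _ _)).trans (hγ α β hα hβ)⟩)
  refine ⟨l₁ - l₂, fun u hu => ?_⟩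
  obtain ⟨A, h1, h2, h3, h4⟩ := h_cauchy hC u hu
  refine ⟨(fun a => a + a) '' A, h1.image _, ?_, ⟨?_, ?_⟩, ?_⟩
  · rintro _ ⟨a, ha, rfl⟩ _ ⟨b, hb, rfl⟩
    obtain ⟨c, hc, hca, hcb⟩ := h2 a ha b hb
    exact ⟨c + c, ⟨c, hc, rfl⟩, add_le_add hca hca, add_le_add hcb hcb⟩
  · rintro _ ⟨a, ha, rfl⟩
    exact add_nonneg (h3.1 ha) (h3.1 ha)
  · intro c hc
    apply h3.2
    intro b hb
    rw [← sub_nonpos]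
    apply h3.2
    intro a ha
    rw [sub_le_iff_le_add]
    obtain ⟨d, hd, hda, hdb⟩ := h2 a ha b hb
    exact (hc ⟨d, hd, rfl⟩).trans (add_le_add hda hdb)
  · rintro _ ⟨a, ha, rfl⟩
    obtain ⟨γ, hγ⟩ := h4 a ha
    refine ⟨γ, fun α hα => ?_⟩
    have e1 := hl₁ u a hu (h3.1 ha) γ
      (fun α β hα hβ => (inf_le_inf_right u (h_posdiff _ _)).trans (hγ α β hα hβ)) α hα
    have e2 := hl₂ u a hu (h3.1 ha) γ
      (fun α β hα hβ => (inf_le_inf_right u (hneg _ _)).trans (hγ α β hα hβ)) α hα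
    simp only [sub_zero]
    rw [abs_of_nonneg (le_inf (abs_nonneg _) hu)]
    refine le_trans ?_ (add_le_add e1 e2)
    have e3 : y α = (y α ⊔ 0) - (-y α ⊔ 0) := (posPart_sub_negPart (y α)).symm
    have e4 : |y α - (l₁ - l₂)| ≤ |(y α ⊔ 0) - l₁| + |(-y α ⊔ 0) - l₂| := by
      have : y α - (l₁ - l₂) = ((y α ⊔ 0) - l₁) - ((-y α ⊔ 0) - l₂) := by
        nth_rewrite 1 [e3]; abel
      rw [this, sub_eq_add_neg]
      refine (abs_add_le _ _).trans ?_
      rw [abs_neg]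
    rw [inf_comm, inf_comm _ u, inf_comm _ u]
    exact (inf_le_inf_left u e4).trans (h_inf_add_le hu (abs_nonneg _) (abs_nonneg _))

theorem h_transfer {X : Type*}
    [Lattice X] [AddCommGroup X] [CovariantClass X X (· + ·) (· ≤ ·)]
    [Module ℝ X] [Module ℝ Y]
    (ι : X →ₗ[ℝ] Y) (hinj : Function.Injective ι)
    (hlatt : ∀ a b : X, ι (a ⊔ b) = ι a ⊔ ι b)
    (hdense : ∀ z : Y, 0 < z → ∃ x : X, 0 < ι x ∧ ι x ≤ z)
    (hYdc : ∀ S : Set Y, S.Nonempty → BddBelow S → BddAbove S → ∃ s, IsLUB S s)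
    {Γ : Type*} [Preorder Γ] [IsDirected Γ (· ≤ ·)] [Nonempty Γ] (x : Γ → X)
    (hC : UoCauchy x) : UoCauchy (fun α => ι (x α)) := by
  have hle : ∀ a b : X, ι a ≤ ι b ↔ a ≤ b := by
    intro a b
    rw [← sup_eq_right, ← hlatt, hinj.eq_iff, sup_eq_right]
  have habs : ∀ a : X, ι |a| = |ι a| := by
    intro a
    rw [abs, abs, hlatt, map_neg]
  have hinf : ∀ a b : X, ι (a ⊓ b) = ι a ⊓ ι b := by
    intro a b
    have h1 : ι (a ⊓ b) + ι (a ⊔ b) = ι a + ι b := by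
      rw [← map_add, inf_add_sup, map_add]
    rw [hlatt, ← inf_add_sup (ι a) (ι b)] at h1
    exact add_right_cancel h1
  intro u hu
  set T : Γ → Set Y := fun γ => {p | ∃ α β, γ ≤ α ∧ γ ≤ β ∧ p = |ι (x α) - ι (x β)| ⊓ u}
  have hT : ∀ γ, ∃ s, IsLUB (T γ) s := fun γ =>
    hYdc (T γ) ⟨_, γ, γ, le_rfl, le_rfl, rfl⟩
      ⟨0, by rintro _ ⟨α, β, -, -, rfl⟩; exact le_inf (abs_nonneg _) hu⟩
      ⟨u, by rintro _ ⟨α, β, -, -, rfl⟩; exact inf_le_right⟩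
  choose s hs using hT
  have hs0 : ∀ γ, 0 ≤ s γ := fun γ =>
    le_trans (le_inf (abs_nonneg _) hu) ((hs γ).1 ⟨γ, γ, le_rfl, le_rfl, rfl⟩)
  have hanti : ∀ γ δ, γ ≤ δ → s δ ≤ s γ := by
    intro γ δ h
    refine (hs δ).2 ?_
    rintro _ ⟨α, β, h1, h2, rfl⟩
    exact (hs γ).1 ⟨α, β, h.trans h1, h.trans h2, rfl⟩
  refine ⟨range s, range_nonempty s, ?_, ⟨?_, ?_⟩, ?_⟩
  · rintro _ ⟨γ, rfl⟩ _ ⟨δ, rfl⟩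
    obtain ⟨ε, h1, h2⟩ := exists_ge_ge γ δ
    exact ⟨s ε, ⟨ε, rfl⟩, hanti _ _ h1, hanti _ _ h2⟩
  · rintro _ ⟨γ, rfl⟩
    exact hs0 γ
  · intro c hc
    by_contra hcn
    have hcpos : 0 < c ⊔ 0 := lt_of_le_of_ne le_sup_right fun h =>
      hcn (le_sup_left.trans h.symm.le)
    obtain ⟨w, hw0, hwc⟩ := hdense _ hcpos
    have hw : 0 ≤ w := by rw [← hle, map_zero]; exact hw0.le
    obtain ⟨A, -, -, h3, h4⟩ := h_cauchy hC w hw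
    have : w ≤ 0 := by
      apply h3.2
      intro a ha
      obtain ⟨γ, hγ⟩ := h4 a ha
      rw [← hle]
      have h5 : s γ ⊓ ι w ≤ ι a := by
        apply h_lub_inf (hs γ)
        rintro _ ⟨α, β, h1, h2, rfl⟩
        refine (inf_le_inf_right _ inf_le_left).trans ?_
        rw [← map_sub, ← habs, ← hinf, hle]
        exact hγ α β h1 h2
      refine le_trans (le_inf ?_ le_rfl) h5
      exact hwc.trans (sup_le (hc ⟨γ, rfl⟩) (hs0 γ))
    rw [← hle, map_zero] at this
    exact hw0.not_ge this
  · rintro _ ⟨γ, rfl⟩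
    refine ⟨(γ, γ), ?_⟩
    rintro ⟨α, β⟩ ⟨h1, h2⟩
    simp only [sub_zero]
    rw [abs_of_nonneg (le_inf (abs_nonneg _) hu)]
    exact (hs γ).1 ⟨α, β, h1, h2, rfl⟩

end Helpers

/-- Let `X` be a vector lattice and `D` a maximal collection of pairwise
disjoint nonzero positive vectors of `X` such that for each `d ∈ D` the band generated by
`d` has the countable sup property. Then the universal completion `Xᵘ` of `X` (here: any
universally complete vector lattice `Y` containing `X` as an order dense sublattice) is
uo-complete, and every uo-Cauchy net in `X` uo-converges in `Xᵘ`. -/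
theorem stmt9 {X Y : Type*}
    [Lattice X] [AddCommGroup X] [CovariantClass X X (· + ·) (· ≤ ·)]
    [Module ℝ X] [PosSMulMono ℝ X]
    [Lattice Y] [AddCommGroup Y] [CovariantClass Y Y (· + ·) (· ≤ ·)]
    [Module ℝ Y] [PosSMulMono ℝ Y]
    (harchX : VLArchimedean X) (harchY : VLArchimedean Y)
    -- `ι` embeds `X` into `Y` as a sublattice:
    (ι : X →ₗ[ℝ] Y) (hinj : Function.Injective ι)
    (hlatt : ∀ a b : X, ι (a ⊔ b) = ι a ⊔ ι b)
    -- `X` is order dense in `Y`: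
    (hdense : ∀ z : Y, 0 < z → ∃ x : X, 0 < ι x ∧ ι x ≤ z)
    -- `Y` is order complete:
    (hYdc : ∀ S : Set Y, S.Nonempty → BddBelow S → BddAbove S → ∃ s, IsLUB S s)
    -- `Y` is laterally complete:
    (hYlat : ∀ A : Set Y, A.Nonempty → (∀ a ∈ A, 0 ≤ a) →
      A.Pairwise (fun a b => a ⊓ b = 0) → ∃ s, IsLUB A s)
    -- `D` is a maximal collection of pairwise disjoint nonzero positive vectors of `X`:
    (D : Set X) (hDpos : ∀ d ∈ D, 0 < d)
    (hDdisj : D.Pairwise fun a b => a ⊓ b = 0)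
    (hDmax : ∀ x : X, 0 < x → (∀ d ∈ D, x ⊓ d = 0) → False)
    -- each band generated by an element of `D` has the countable sup property:
    (hband : ∀ d ∈ D, CountableSupWithin (bandGen d)) :
    -- `Y` is uo-complete:
    (∀ (Γ : Type*) [Preorder Γ] [IsDirected Γ (· ≤ ·)] [Nonempty Γ] (y : Γ → Y),
        UoCauchy y → ∃ l, UoTendsto y l) ∧
    -- every uo-Cauchy net in `X` uo-converges in `Y`:
    (∀ (Γ : Type*) [Preorder Γ] [IsDirected Γ (· ≤ ·)] [Nonempty Γ] (x : Γ → X),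
        UoCauchy x → ∃ l : Y, UoTendsto (fun α => ι (x α)) l) := by
  exact ⟨fun Γ _ _ _ y hy => h_complete harchY hYdc hYlat y hy,
    fun Γ _ _ _ x hx => h_complete harchY hYdc hYlat _
      (h_transfer ι hinj hlatt hdense hYdc x hx)⟩
end

section
/- Let X be a vector lattice whose order continuous dual X_n^~ separates the points of X (this holds in particular when X is an order continuous Banach lattice). Then the universal completion X^u is uo-complete, and every uo-Cauchy net in X uo-converges in X^u. -/
open Filter Set

/-- A linear functional is *order continuous* if it sends order null nets to null nets
of reals. -/
def OrdContFunctional {X : Type*} [Lattice X] [AddCommGroup X]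
    [CovariantClass X X (· + ·) (· ≤ ·)] [Module ℝ X] (f : X →ₗ[ℝ] ℝ) : Prop :=
  ∀ (Γ : Type*) [Preorder Γ] [IsDirected Γ (· ≤ ·)] [Nonempty Γ] (x : Γ → X),
    OrderTendsto x 0 → Filter.Tendsto (fun α => f (x α)) Filter.atTop (nhds 0)

set_option linter.unusedSectionVars false

section Helpers

variable {Y : Type*} [Lattice Y] [AddCommGroup Y] [CovariantClass Y Y (· + ·) (· ≤ ·)]

lemma aux_lub_inf {S : Set Y} {s x c : Y} (hs : IsLUB S s) (h : ∀ u ∈ S, u ⊓ x ≤ c) :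
    s ⊓ x ≤ c := by
  have h1 : s ≤ c + (s ⊔ x) - x := by
    apply hs.2
    intro u hu
    rw [le_sub_iff_add_le, ← inf_add_sup u x]
    exact add_le_add (h u hu) (sup_le_sup_right (hs.1 hu) x)
  rw [le_sub_iff_add_le, ← inf_add_sup s x] at h1
  exact le_of_add_le_add_right h1

lemma aux_sup_inf {a b x c : Y} (ha : a ⊓ x ≤ c) (hb : b ⊓ x ≤ c) : (a ⊔ b) ⊓ x ≤ c := by
  apply aux_lub_inf (isLUB_pair (a := a) (b := b))
  rintro u (rfl | rfl)
  · exact ha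
  · exact hb

lemma aux_lub_sub {S : Set Y} {s y x c : Y} (hs : IsLUB S s) (h : ∀ u ∈ S, (u - y) ⊓ x ≤ c) :
    (s - y) ⊓ x ≤ c := by
  have h1 : IsLUB ((fun u => u - y) '' S) (s - y) := by
    constructor
    · rintro _ ⟨u, hu, rfl⟩
      exact sub_le_sub_right (hs.1 hu) y
    · intro z hz
      rw [sub_le_iff_le_add]
      apply hs.2
      intro u hu
      rw [← sub_le_iff_le_add]
      exact hz ⟨u, hu, rfl⟩
  apply aux_lub_inf h1
  rintro _ ⟨u, hu, rfl⟩
  exact h u hu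

lemma aux_glb_sub {S : Set Y} {s y x c : Y} (hs : IsGLB S s) (h : ∀ u ∈ S, (y - u) ⊓ x ≤ c) :
    (y - s) ⊓ x ≤ c := by
  have h1 : IsLUB ((fun u => y - u) '' S) (y - s) := by
    constructor
    · rintro _ ⟨u, hu, rfl⟩
      exact sub_le_sub_left (hs.1 hu) y
    · intro z hz
      rw [sub_le_comm]
      apply hs.2
      intro u hu
      rw [sub_le_comm]
      exact hz ⟨u, hu, rfl⟩
  apply aux_lub_inf h1
  rintro _ ⟨u, hu, rfl⟩
  exact h u hu

lemma aux_disj_add {a b c : Y} (hc0 : 0 ≤ c) (hb0 : 0 ≤ b) (hb : a ⊓ b = 0) (hc : a ⊓ c = 0) :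
    a ⊓ (b + c) = 0 := by
  have ha : 0 ≤ a := hb ▸ inf_le_left
  apply le_antisymm _ (le_inf ha (add_nonneg hb0 hc0))
  have h1 : a ⊓ (b + c) - c ≤ a ⊓ b := by
    apply le_inf
    · rw [sub_le_iff_le_add]
      exact inf_le_left.trans (le_add_of_nonneg_right hc0)
    · rw [sub_le_iff_le_add]
      exact inf_le_right
  rw [hb, sub_nonpos] at h1
  rw [← hc]
  exact le_inf inf_le_left h1

lemma aux_disj_nsmul {a b : Y} (hb : a ⊓ b = 0) (n : ℕ) : a ⊓ (n • b) = 0 := by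
  have ha : 0 ≤ a := hb ▸ inf_le_left
  have hb0 : 0 ≤ b := hb ▸ inf_le_right
  induction n with
  | zero => rw [zero_smul]; exact inf_eq_right.2 ha
  | succ n ih =>
    rw [succ_nsmul]
    exact aux_disj_add hb0 (nsmul_nonneg hb0 n) ih hb

lemma aux_disj_mono {a b c : Y} (hc0 : 0 ≤ c) (hcb : c ≤ b) (hb : a ⊓ b = 0) : a ⊓ c = 0 := by
  have ha : 0 ≤ a := hb ▸ inf_le_left
  exact le_antisymm (hb ▸ inf_le_inf_left a hcb) (le_inf ha hc0)

lemma aux_pos_disj (x : Y) : (x ⊔ 0) ⊓ ((-x) ⊔ 0) = 0 := by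
  have := posPart_inf_negPart_eq_zero x
  simpa [posPart_def, negPart_def] using this

/-- Archimedean argument. -/
lemma aux_arch (harch : VLArchimedean Y) {e y b : Y} (he : 0 ≤ e) (hy : 0 ≤ y) (hb : 0 ≤ b)
    (h : ∀ n : ℕ, (n • e - y) ⊓ e ≤ b) : e ≤ b := by
  set t := (e - b) ⊔ 0 with ht
  have ht0 : 0 ≤ t := le_sup_right
  have key : t = 0 := by
    apply harch t (y + b) ht0
    intro n
    -- the positive part of n e - y - b is disjoint from t
    have h1 : ((n • e - (y + b)) ⊔ 0) ⊓ t = 0 := by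
      apply le_antisymm _ (le_inf le_sup_right ht0)
      apply aux_sup_inf
      swap
      · exact inf_le_left
      rw [inf_comm]
      apply aux_sup_inf
      swap
      · exact inf_le_left
      rw [inf_comm]
      have h2 := sub_le_sub_right (h n) b
      have h3 : (n • e - (y + b)) ⊓ (e - b) = (n • e - y) ⊓ e - b := by
        rw [inf_sub]
        congr 1
        abel
      rw [h3]
      simpa using h2
    have hte : t ≤ e := sup_le (sub_le_self e hb) he
    have h4 : t ⊓ ((n • t - (y + b)) ⊔ 0) = 0 := by
      rw [inf_comm] at h1
      exact aux_disj_mono le_sup_right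
        (sup_le_sup_right (sub_le_sub_right (nsmul_le_nsmul_right hte n) _) _) h1
    rw [inf_comm] at h4
    have h5 := aux_disj_nsmul h4 n
    have h6 : (n • t - (y + b)) ⊔ 0 ≤ n • t :=
      sup_le (sub_le_self _ (add_nonneg hy hb)) (nsmul_nonneg ht0 n)
    rw [inf_eq_left.2 h6] at h5
    exact sub_nonpos.1 (sup_eq_right.1 h5)
  have : e - b ≤ 0 := key ▸ (le_sup_left : e - b ≤ t)
  exact sub_nonpos.1 this

/-- Conditional completeness in the usual form. -/
lemma aux_lub (hYdc : ∀ S : Set Y, S.Nonempty → BddBelow S → BddAbove S → ∃ s, IsLUB S s)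
    {S : Set Y} (hne : S.Nonempty) (hb : BddAbove S) : ∃ s, IsLUB S s := by
  obtain ⟨s0, hs0⟩ := hne
  obtain ⟨c, hc⟩ := hb
  obtain ⟨s, hs⟩ := hYdc ((fun u => u ⊔ s0) '' S) ⟨_, s0, hs0, rfl⟩
    ⟨s0, by rintro _ ⟨u, _, rfl⟩; exact le_sup_right⟩
    ⟨c, by rintro _ ⟨u, hu, rfl⟩; exact sup_le (hc hu) (hc hs0)⟩
  refine ⟨s, fun u hu => le_sup_left.trans (hs.1 ⟨u, hu, rfl⟩), fun z hz => hs.2 ?_⟩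
  rintro _ ⟨u, hu, rfl⟩
  exact sup_le (hz hu) (hz hs0)

lemma aux_glb (hYdc : ∀ S : Set Y, S.Nonempty → BddBelow S → BddAbove S → ∃ s, IsLUB S s)
    {S : Set Y} (hne : S.Nonempty) (hb : BddBelow S) : ∃ s, IsGLB S s := by
  obtain ⟨s, hs⟩ := aux_lub hYdc hb hne.bddAbove_lowerBounds
  exact ⟨s, isLUB_lowerBounds.1 hs⟩

/-- If the truncations of `D` at multiples of `e` do not exhaust all multiples of `e`, there is
a nonzero piece below a multiple of `e` on which `D` is bounded. -/
lemma aux_good (hYdc : ∀ S : Set Y, S.Nonempty → BddBelow S → BddAbove S → ∃ s, IsLUB S s)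
    {D : Set Y} (hD : (0 : Y) ∈ D) {v : Y} (hv : 0 ≤ v)
    (h : ¬ IsLUB ((fun d => d ⊓ v) '' D) v) :
    ∃ g : Y, 0 ≤ g ∧ g ≠ 0 ∧ g ≤ v ∧ ∀ d ∈ D, ((d - g) ⊔ 0) ⊓ g = 0 := by
  have hub : v ∈ upperBounds ((fun d => d ⊓ v) '' D) := by
    rintro _ ⟨d, _, rfl⟩
    exact inf_le_right
  obtain ⟨u, hu⟩ := aux_lub hYdc (S := (fun d => d ⊓ v) '' D) ⟨_, 0, hD, rfl⟩ ⟨v, hub⟩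
  have huv : u ≤ v := hu.2 hub
  set w := v - u with hw
  have hw0 : 0 ≤ w := sub_nonneg.2 huv
  have hwne : w ≠ 0 := by
    intro h0
    apply h
    rw [sub_eq_zero.1 h0] at *
    exact hu
  have hu0 : 0 ≤ u := by
    have := hu.1 ⟨0, hD, rfl⟩
    simpa [inf_eq_left.2 hv] using this
  have hwv : w ≤ v := sub_le_self v hu0
  obtain ⟨g, hg⟩ := aux_lub hYdc (S := Set.range (fun m : ℕ => v ⊓ m • w)) (Set.range_nonempty _)
    ⟨v, by rintro _ ⟨m, rfl⟩; exact inf_le_left⟩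
  have hgv : g ≤ v := hg.2 (by rintro _ ⟨m, rfl⟩; exact inf_le_left)
  have hwg : w ≤ g := by
    have := hg.1 ⟨1, rfl⟩
    simp only [one_smul] at this
    rwa [inf_eq_right.2 hwv] at this
  have hg0 : 0 ≤ g := hw0.trans hwg
  refine ⟨g, hg0, fun h0 => hwne (le_antisymm (h0 ▸ hwg) hw0), hgv, fun d hd => ?_⟩
  have h1 : w ⊓ (v - g) = 0 := by
    apply le_antisymm _ (le_inf hw0 (sub_nonneg.2 hgv))
    have : g ≤ g - w ⊓ (v - g) := by
      apply hg.2
      rintro _ ⟨m, rfl⟩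
      rw [le_sub_iff_add_le]
      refine le_trans (le_inf ?_ ?_) (hg.1 ⟨m + 1, rfl⟩)
      · calc v ⊓ m • w + w ⊓ (v - g) ≤ g + (v - g) := add_le_add (hg.1 ⟨m, rfl⟩) inf_le_right
          _ = v := by abel
      · simp only [succ_nsmul]
        exact add_le_add inf_le_right inf_le_left
    rwa [le_sub_self_iff] at this
  have h2 : w ⊓ ((d - v) ⊔ 0) = 0 := by
    have h3 := aux_pos_disj (d - v)
    rw [inf_comm]
    refine aux_disj_mono hw0 ?_ h3
    have h4 : d ⊓ v ≤ u := hu.1 ⟨d, hd, rfl⟩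
    calc w ≤ v - d ⊓ v := sub_le_sub_left h4 v
      _ = -(d - v) ⊔ 0 := by rw [sub_inf]; simp
  have h3 : w ⊓ ((d - g) ⊔ 0) = 0 := by
    refine aux_disj_mono le_sup_right ?_
      (aux_disj_add (sub_nonneg.2 hgv) le_sup_right h2 h1)
    apply sup_le
    · calc d - g = (d - v) + (v - g) := by abel
        _ ≤ _ := add_le_add_left le_sup_left _
    · exact add_nonneg le_sup_right (sub_nonneg.2 hgv)
  rw [inf_comm] at h3
  apply le_antisymm _ (le_inf le_sup_right hg0)
  rw [inf_comm]
  apply aux_lub_inf hg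
  rintro _ ⟨m, rfl⟩
  rw [inf_comm]
  exact (inf_le_inf_left _ inf_le_right).trans (aux_disj_nsmul h3 m).le

/-- Dominable sets are order bounded in a universally complete lattice. -/
lemma aux_bounded (hYdc : ∀ S : Set Y, S.Nonempty → BddBelow S → BddAbove S → ∃ s, IsLUB S s)
    (hYlat : ∀ A : Set Y, A.Nonempty → (∀ a ∈ A, 0 ≤ a) →
      A.Pairwise (fun a b => a ⊓ b = 0) → ∃ s, IsLUB A s)
    {D : Set Y} (hD : (0 : Y) ∈ D)
    (hdom : ∀ e : Y, 0 ≤ e → e ≠ 0 → ∃ n : ℕ, ¬ IsLUB ((fun d => d ⊓ n • e) '' D) (n • e)) :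
    BddAbove D := by
  let F : Set (Set Y) := {S | (∀ g ∈ S, 0 ≤ g ∧ ∀ d ∈ D, ((d - g) ⊔ 0) ⊓ g = 0) ∧
    S.Pairwise (fun a b => a ⊓ b = 0)}
  obtain ⟨M, hM⟩ : ∃ M, Maximal (· ∈ F) M := by
    apply zorn_subset F
    intro c hcF hc
    refine ⟨⋃₀ c, ⟨?_, ?_⟩, fun s hs => Set.subset_sUnion_of_mem hs⟩
    · rintro g ⟨S, hS, hg⟩
      exact (hcF hS).1 g hg
    · rw [Set.pairwise_sUnion hc.directedOn]
      exact fun S hS => (hcF hS).2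
  have hins : ∀ g : Y, 0 ≤ g → (∀ d ∈ D, ((d - g) ⊔ 0) ⊓ g = 0) → (∀ m ∈ M, g ⊓ m = 0) →
      g ∈ M := by
    intro g hg0 hg hgm
    have : insert g M ∈ F := by
      refine ⟨?_, ?_⟩
      · rintro k (rfl | hk)
        · exact ⟨hg0, hg⟩
        · exact hM.prop.1 k hk
      · refine hM.prop.2.insert fun b hb _ => ⟨hgm b hb, ?_⟩
        rw [inf_comm]
        exact hgm b hb
    exact hM.le_of_ge this (Set.subset_insert g M) (Set.mem_insert g M)
  have h0 : (0 : Y) ∈ M := hins 0 le_rfl (fun d _ => inf_eq_right.2 le_sup_right)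
    fun m hm => inf_eq_left.2 (hM.prop.1 m hm).1
  obtain ⟨s, hs⟩ := hYlat M ⟨0, h0⟩ (fun a ha => (hM.prop.1 a ha).1) hM.prop.2
  refine ⟨s, fun d hd => ?_⟩
  by_contra hds
  set e := (d - s) ⊔ 0 with he
  have he0 : 0 ≤ e := le_sup_right
  have hene : e ≠ 0 := by
    intro h
    exact hds (sub_nonpos.1 (sup_eq_right.1 h))
  obtain ⟨n, hn⟩ := hdom e he0 hene
  obtain ⟨g, hg0, hgne, hgle, hg⟩ := aux_good hYdc hD (nsmul_nonneg he0 n) hn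
  have hem : ∀ m ∈ M, m ⊓ e = 0 := by
    intro m hm
    obtain ⟨hm0, hmd⟩ := hM.prop.1 m hm
    have := hmd d hd
    rw [inf_comm] at this
    exact aux_disj_mono he0 (sup_le_sup_right (sub_le_sub_left (hs.1 hm) d) 0) this
  have hgm : ∀ m ∈ M, g ⊓ m = 0 := by
    intro m hm
    rw [inf_comm]
    exact aux_disj_mono hg0 hgle (aux_disj_nsmul (hem m hm) n)
  have := hgm g (hins g hg0 hg hgm)
  rw [inf_idem] at this
  exact hgne this

/-- The main step: positive nets. -/
lemma aux_pos (harch : VLArchimedean Y)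
    (hYdc : ∀ S : Set Y, S.Nonempty → BddBelow S → BddAbove S → ∃ s, IsLUB S s)
    (hYlat : ∀ A : Set Y, A.Nonempty → (∀ a ∈ A, 0 ≤ a) →
      A.Pairwise (fun a b => a ⊓ b = 0) → ∃ s, IsLUB A s)
    {Γ : Type*} [Preorder Γ] [IsDirected Γ (· ≤ ·)] [Nonempty Γ] (y : Γ → Y)
    (hy : ∀ α, 0 ≤ y α)
    (hC : ∀ e : Y, 0 ≤ e → ∃ A : Set Y, IsGLB A 0 ∧
      ∀ a ∈ A, ∃ α₀ : Γ, ∀ α β, α₀ ≤ α → α₀ ≤ β → |y α - y β| ⊓ e ≤ a) :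
    ∃ l : Y, ∀ (e a : Y) (α₀ : Γ), (∀ α β, α₀ ≤ α → α₀ ≤ β → |y α - y β| ⊓ e ≤ a) →
      ∀ α, α₀ ≤ α → |y α - l| ⊓ e ≤ a := by
  set D : Set Y := {d | ∃ γ, ∀ β, γ ≤ β → d ≤ y β} with hDdef
  have hD0 : (0 : Y) ∈ D := ⟨Classical.arbitrary Γ, fun β _ => hy β⟩
  have hlow : ∀ (e a : Y) (α₀ : Γ), (∀ α β, α₀ ≤ α → α₀ ≤ β → |y α - y β| ⊓ e ≤ a) →
      ∀ α, α₀ ≤ α → ∀ d ∈ D, (d - y α) ⊓ e ≤ a := by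
    intro e a α₀ h α hα d hd
    obtain ⟨γ, hγ⟩ := hd
    obtain ⟨β, hβ1, hβ2⟩ := directed_of (· ≤ ·) α₀ γ
    refine le_trans (inf_le_inf_right e ?_) (h β α hβ1 hα)
    exact (sub_le_sub_right (hγ β hβ2) _).trans (le_abs_self _)
  have hbdd : BddAbove D := by
    apply aux_bounded hYdc hYlat hD0
    intro e he0 hene
    by_contra! hcon
    obtain ⟨A, hA, hAC⟩ := hC e he0
    apply hene
    refine le_antisymm (hA.2 fun b hb => ?_) he0
    obtain ⟨α₀, hα₀⟩ := hAC b hb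
    apply aux_arch harch he0 (hy α₀) (hA.1 hb)
    intro n
    apply aux_lub_sub (hcon n)
    rintro _ ⟨d, hd, rfl⟩
    refine le_trans (inf_le_inf_right e ?_) (hlow e b α₀ hα₀ α₀ le_rfl d hd)
    exact sub_le_sub_right inf_le_left _
  obtain ⟨l, hl⟩ := aux_lub hYdc ⟨0, hD0⟩ hbdd
  refine ⟨l, fun e a α₀ h α hα => ?_⟩
  have h1 : (l - y α) ⊓ e ≤ a := aux_lub_sub hl (hlow e a α₀ h α hα)
  have h2 : (y α - l) ⊓ e ≤ a := by
    obtain ⟨i, hi⟩ := aux_glb hYdc (S := y '' {β | α₀ ≤ β}) ⟨_, α₀, le_refl α₀, rfl⟩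
      ⟨0, by rintro _ ⟨β, _, rfl⟩; exact hy β⟩
    have hil : i ≤ l := hl.1 ⟨α₀, fun β hβ => hi.1 ⟨β, hβ, rfl⟩⟩
    refine le_trans (inf_le_inf_right e (sub_le_sub_left hil _)) ?_
    apply aux_glb_sub hi
    rintro _ ⟨β, hβ, rfl⟩
    exact le_trans (inf_le_inf_right e (le_abs_self _)) (h α β hα hβ)
  rw [abs, neg_sub]
  exact aux_sup_inf h2 h1

lemma aux_inf_add_s10 {a b c e : Y} (hb : 0 ≤ b) (hc : 0 ≤ c) (he : 0 ≤ e) (h : a ≤ b + c) :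
    a ⊓ e ≤ b ⊓ e + c ⊓ e := by
  rw [add_inf, inf_add, inf_add]
  refine le_inf (le_inf (inf_le_left.trans h) ?_) (le_inf ?_ ?_)
  · exact inf_le_right.trans (le_add_of_nonneg_right hc)
  · exact inf_le_right.trans (le_add_of_nonneg_left hb)
  · exact inf_le_right.trans (le_add_of_nonneg_left he)

/-- Universally complete lattices are uo-complete. -/
lemma aux_complete [Module ℝ Y] [PosSMulMono ℝ Y] (harch : VLArchimedean Y)
    (hYdc : ∀ S : Set Y, S.Nonempty → BddBelow S → BddAbove S → ∃ s, IsLUB S s)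
    (hYlat : ∀ A : Set Y, A.Nonempty → (∀ a ∈ A, 0 ≤ a) →
      A.Pairwise (fun a b => a ⊓ b = 0) → ∃ s, IsLUB A s)
    {Γ : Type*} [Preorder Γ] [IsDirected Γ (· ≤ ·)] [Nonempty Γ] (y : Γ → Y)
    (hy : UoCauchy y) : ∃ l, UoTendsto y l := by
  have hC : ∀ e : Y, 0 ≤ e → ∃ A : Set Y, A.Nonempty ∧ DirectedOn (· ≥ ·) A ∧ IsGLB A 0 ∧
      ∀ a ∈ A, ∃ α₀ : Γ, ∀ α β, α₀ ≤ α → α₀ ≤ β → |y α - y β| ⊓ e ≤ a := by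
    intro e he
    obtain ⟨A, hAne, hAd, hA, h⟩ := hy e he
    refine ⟨A, hAne, hAd, hA, fun a ha => ?_⟩
    obtain ⟨⟨p, q⟩, hpq⟩ := h a ha
    obtain ⟨α₀, h1, h2⟩ := directed_of (· ≤ ·) p q
    refine ⟨α₀, fun α β hα hβ => ?_⟩
    have := hpq (α, β) ⟨h1.trans hα, h2.trans hβ⟩
    simp only [sub_zero] at this
    exact (le_abs_self _).trans this
  have hpos : ∀ α β, |y α ⊔ 0 - y β ⊔ 0| ≤ |y α - y β| := fun α β =>
    abs_sup_sub_sup_le_abs _ _ _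
  have hneg : ∀ α β, |(-y α) ⊔ 0 - (-y β) ⊔ 0| ≤ |y α - y β| := fun α β => by
    refine (abs_sup_sub_sup_le_abs _ _ _).trans_eq ?_
    rw [← abs_neg]
    congr 1
    abel
  obtain ⟨p, hp⟩ := aux_pos harch hYdc hYlat (fun α => y α ⊔ 0) (fun _ => le_sup_right) (by
    intro e he
    obtain ⟨A, -, -, hA, h⟩ := hC e he
    refine ⟨A, hA, fun a ha => ?_⟩
    obtain ⟨α₀, h0⟩ := h a ha
    exact ⟨α₀, fun α β hα hβ => (inf_le_inf_right e (hpos α β)).trans (h0 α β hα hβ)⟩)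
  obtain ⟨q, hq⟩ := aux_pos harch hYdc hYlat (fun α => (-y α) ⊔ 0) (fun _ => le_sup_right) (by
    intro e he
    obtain ⟨A, -, -, hA, h⟩ := hC e he
    refine ⟨A, hA, fun a ha => ?_⟩
    obtain ⟨α₀, h0⟩ := h a ha
    exact ⟨α₀, fun α β hα hβ => (inf_le_inf_right e (hneg α β)).trans (h0 α β hα hβ)⟩)
  refine ⟨p - q, fun e he => ?_⟩
  obtain ⟨A, hAne, hAd, hA, h⟩ := hC e he
  refine ⟨(fun a => a + a) '' A, hAne.image _, ?_, ⟨?_, ?_⟩, ?_⟩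
  · rintro _ ⟨a, ha, rfl⟩ _ ⟨b, hb, rfl⟩
    obtain ⟨c, hc, h1, h2⟩ := hAd a ha b hb
    exact ⟨_, ⟨c, hc, rfl⟩, add_le_add h1 h1, add_le_add h2 h2⟩
  · rintro _ ⟨a, ha, rfl⟩
    exact add_nonneg (hA.1 ha) (hA.1 ha)
  · intro z hz
    have h1 : (2⁻¹ : ℝ) • z ≤ 0 := by
      apply hA.2
      intro a ha
      have h2 : z ≤ a + a := hz ⟨a, ha, rfl⟩
      have h3 := smul_le_smul_of_nonneg_left h2 (by norm_num : (0 : ℝ) ≤ 2⁻¹)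
      rwa [← two_smul ℝ a, smul_smul, inv_mul_cancel₀ two_ne_zero, one_smul] at h3
    have h3 := smul_le_smul_of_nonneg_left h1 (by norm_num : (0 : ℝ) ≤ 2)
    rwa [smul_smul, mul_inv_cancel₀ two_ne_zero, one_smul, smul_zero] at h3
  · rintro _ ⟨a, ha, rfl⟩
    obtain ⟨α₀, h0⟩ := h a ha
    refine ⟨α₀, fun α hα => ?_⟩
    rw [sub_zero, abs_of_nonneg (le_inf (abs_nonneg _) he)]
    have h1 := hp e a α₀
      (fun α β hα hβ => (inf_le_inf_right e (hpos α β)).trans (h0 α β hα hβ)) α hα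
    have h2 := hq e a α₀
      (fun α β hα hβ => (inf_le_inf_right e (hneg α β)).trans (h0 α β hα hβ)) α hα
    refine (aux_inf_add_s10 (abs_nonneg _) (abs_nonneg _) he ?_).trans (add_le_add h1 h2)
    have h3 : y α - (p - q) = (y α ⊔ 0 - p) - ((-y α) ⊔ 0 - q) := by
      have h4 : y α ⊔ 0 - (-y α) ⊔ 0 = y α := by
        have := posPart_sub_negPart (y α)
        simpa [posPart_def, negPart_def] using this
      calc y α - (p - q) = (y α ⊔ 0 - (-y α) ⊔ 0) - (p - q) := by rw [h4]
        _ = _ := by abel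
    rw [h3]
    have h5 := abs_add_le (y α ⊔ 0 - p) (-((-y α) ⊔ 0 - q))
    rwa [abs_neg, ← sub_eq_add_neg] at h5

end Helpers

/-- Uo-null nets in an order dense sublattice are uo-null in the big lattice. -/
lemma aux_embed {X Y : Type*}
    [Lattice X] [AddCommGroup X] [CovariantClass X X (· + ·) (· ≤ ·)] [Module ℝ X]
    [Lattice Y] [AddCommGroup Y] [CovariantClass Y Y (· + ·) (· ≤ ·)] [Module ℝ Y]
    (ι : X →ₗ[ℝ] Y) (hinj : Function.Injective ι)
    (hlatt : ∀ a b : X, ι (a ⊔ b) = ι a ⊔ ι b)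
    (hdense : ∀ z : Y, 0 < z → ∃ x : X, 0 < ι x ∧ ι x ≤ z)
    (hYdc : ∀ S : Set Y, S.Nonempty → BddBelow S → BddAbove S → ∃ s, IsLUB S s)
    {Γ : Type*} [Preorder Γ] [IsDirected Γ (· ≤ ·)] [Nonempty Γ] (x : Γ → X)
    (hx : UoTendsto x 0) : UoTendsto (fun α => ι (x α)) 0 := by
  have hle : ∀ a b : X, ι a ≤ ι b ↔ a ≤ b := by
    intro a b
    rw [← sup_eq_right, ← hlatt, hinj.eq_iff, sup_eq_right]
  have habs : ∀ a : X, ι |a| = |ι a| := by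
    intro a
    rw [abs, abs, hlatt, map_neg]
  have hinf : ∀ a b : X, ι (a ⊓ b) = ι a ⊓ ι b := by
    intro a b
    have h1 := inf_add_sup (ι a) (ι b)
    rw [← map_add, ← inf_add_sup a b, map_add, hlatt] at h1
    exact (add_right_cancel h1).symm
  intro y hy
  refine ⟨{b | ∃ α₀ : Γ, ∀ α, α₀ ≤ α → |ι (x α)| ⊓ y ≤ b}, ?_, ?_, ⟨?_, ?_⟩, ?_⟩
  · exact ⟨y, Classical.arbitrary Γ, fun _ _ => inf_le_right⟩
  · rintro b ⟨α, hα⟩ c ⟨β, hβ⟩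
    obtain ⟨γ, h1, h2⟩ := directed_of (· ≤ ·) α β
    exact ⟨b ⊓ c, ⟨γ, fun δ hδ => le_inf (hα δ (h1.trans hδ)) (hβ δ (h2.trans hδ))⟩,
      inf_le_left, inf_le_right⟩
  · rintro b ⟨α, hα⟩
    exact (le_inf (abs_nonneg _) hy).trans (hα α le_rfl)
  · intro z hz
    by_contra hz0
    have hzpos : 0 < z ⊔ 0 := lt_of_le_of_ne le_sup_right fun h => hz0 (sup_eq_right.1 h.symm)
    obtain ⟨w, hw0, hwz⟩ := hdense _ hzpos
    have hw : 0 ≤ w := by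
      rw [← hle, map_zero]
      exact hw0.le
    obtain ⟨A, -, -, hA, h⟩ := hx w hw
    have hwA : w ≤ 0 := by
      apply hA.2
      intro a ha
      obtain ⟨α₀, hα₀⟩ := h a ha
      obtain ⟨s, hs⟩ := aux_lub hYdc (S := (fun α => |ι (x α)| ⊓ y) '' {α | α₀ ≤ α})
        ⟨_, α₀, le_refl α₀, rfl⟩ ⟨y, by rintro _ ⟨α, _, rfl⟩; exact inf_le_right⟩
      have hzs : z ≤ s := hz ⟨α₀, fun α hα => hs.1 ⟨α, hα, rfl⟩⟩
      have hs0 : 0 ≤ s := (le_inf (abs_nonneg _) hy).trans (hs.1 ⟨α₀, le_refl α₀, rfl⟩)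
      have hsw : s ⊓ ι w ≤ ι a := by
        apply aux_lub_inf hs
        rintro _ ⟨α, hα, rfl⟩
        have h1 := hα₀ α hα
        simp only [sub_zero] at h1
        have h2 := (hle _ _).2 ((le_abs_self _).trans h1)
        rw [hinf, habs] at h2
        exact (inf_le_inf_right _ inf_le_left).trans h2
      rw [← hle]
      exact (le_inf (hwz.trans (sup_le hzs hs0)) le_rfl).trans hsw
    rw [← hle, map_zero] at hwA
    exact absurd hwA (not_le_of_gt hw0)
  · rintro b ⟨α₀, h⟩
    refine ⟨α₀, fun α hα => ?_⟩
    simp only [sub_zero]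
    rw [abs_of_nonneg (le_inf (abs_nonneg _) hy)]
    exact h α hα

/-- Let `X` be a vector lattice whose order continuous dual separates
the points of `X`. Then the universal completion `Xᵘ` of `X` (here: any universally
complete vector lattice `Y` containing `X` as an order dense sublattice) is uo-complete,
and every uo-Cauchy net in `X` uo-converges in `Xᵘ`. -/
theorem stmt10 {X Y : Type*}
    [Lattice X] [AddCommGroup X] [CovariantClass X X (· + ·) (· ≤ ·)]
    [Module ℝ X] [PosSMulMono ℝ X]
    [Lattice Y] [AddCommGroup Y] [CovariantClass Y Y (· + ·) (· ≤ ·)]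
    [Module ℝ Y] [PosSMulMono ℝ Y]
    (harchX : VLArchimedean X) (harchY : VLArchimedean Y)
    -- `ι` embeds `X` into `Y` as a sublattice:
    (ι : X →ₗ[ℝ] Y) (hinj : Function.Injective ι)
    (hlatt : ∀ a b : X, ι (a ⊔ b) = ι a ⊔ ι b)
    -- `X` is order dense in `Y`:
    (hdense : ∀ z : Y, 0 < z → ∃ x : X, 0 < ι x ∧ ι x ≤ z)
    -- `Y` is order complete:
    (hYdc : ∀ S : Set Y, S.Nonempty → BddBelow S → BddAbove S → ∃ s, IsLUB S s)
    -- `Y` is laterally complete: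
    (hYlat : ∀ A : Set Y, A.Nonempty → (∀ a ∈ A, 0 ≤ a) →
      A.Pairwise (fun a b => a ⊓ b = 0) → ∃ s, IsLUB A s)
    -- the order continuous dual of `X` separates the points of `X`:
    (hsep : ∀ x : X, x ≠ 0 → ∃ f : X →ₗ[ℝ] ℝ, OrdContFunctional f ∧ f x ≠ 0) :
    -- `Y` is uo-complete:
    (∀ (Γ : Type*) [Preorder Γ] [IsDirected Γ (· ≤ ·)] [Nonempty Γ] (y : Γ → Y),
        UoCauchy y → ∃ l, UoTendsto y l) ∧
    -- every uo-Cauchy net in `X` uo-converges in `Y`: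
    (∀ (Γ : Type*) [Preorder Γ] [IsDirected Γ (· ≤ ·)] [Nonempty Γ] (x : Γ → X),
        UoCauchy x → ∃ l : Y, UoTendsto (fun α => ι (x α)) l) := by
  refine ⟨fun Γ _ _ _ y hy => aux_complete harchY hYdc hYlat y hy, fun Γ _ _ _ x hx => ?_⟩
  apply aux_complete harchY hYdc hYlat
  have : IsDirected (Γ × Γ) (· ≤ ·) := ⟨fun a b => by
    obtain ⟨c, h1, h2⟩ := directed_of (· ≤ ·) a.1 b.1
    obtain ⟨d, h3, h4⟩ := directed_of (· ≤ ·) a.2 b.2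
    exact ⟨(c, d), ⟨h1, h3⟩, ⟨h2, h4⟩⟩⟩
  have h := aux_embed ι hinj hlatt hdense hYdc _ hx
  simpa only [UoCauchy, map_sub] using h
end

section
/- Direct ℕ × ℕ by (m', n') ≥ (m, n) iff m' ≥ m and n' ≥ n, and define the net (x_{(m,n)}) in ℝ^ℕ by x_{(m,n)}(k) = m + n if m ≤ k or n ≤ k, and x_{(m,n)}(k) = 1/(m+n) if m > k and n > k. Then each x_{(m,n)} is a bounded sequence (lies in ℓ∞), and the net (x_{(m,n)}) uo-converges to 0 in ℝ^ℕ. -/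
open Filter Set

/-- The net `x : ℕ × ℕ → ℝ^ℕ` (with `ℕ × ℕ` directed by the componentwise order):
`x (m, n) k = m + n` if `m ≤ k` or `n ≤ k`, and `x (m, n) k = 1 / (m + n)` otherwise. -/
noncomputable def xnet : ℕ × ℕ → (ℕ → ℝ) := fun p k =>
  if p.1 ≤ k ∨ p.2 ≤ k then ((p.1 : ℝ) + p.2) else 1 / ((p.1 : ℝ) + p.2)

/-- Each `xnet (m, n)` is a bounded sequence (lies in `ℓ∞`), and the net
`xnet` uo-converges to `0` in `ℝ^ℕ`. -/
theorem stmt11 :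
    (∀ p : ℕ × ℕ, ∃ M : ℝ, ∀ k : ℕ, |xnet p k| ≤ M) ∧
    UoTendsto xnet (0 : ℕ → ℝ) := by
  constructor
  · intro p
    refine ⟨max |(p.1 : ℝ) + p.2| |1 / ((p.1 : ℝ) + p.2)|, fun k => ?_⟩
    unfold xnet
    split_ifs
    · exact le_max_left _ _
    · exact le_max_right _ _
  · intro y hy
    have hanti : Antitone (fun (j k : ℕ) => if k < j then min (1 / ((j : ℝ) + 1)) (y k) else y k) := by
      intro i j hij k
      have h1 : 1 / ((j : ℝ) + 1) ≤ 1 / ((i : ℝ) + 1) := by gcongr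
      dsimp only
      split_ifs with h2 h3 h3
      · exact min_le_min_right _ h1
      · exact min_le_right _ _
      · omega
      · exact le_rfl
    refine ⟨Set.range (fun (j k : ℕ) => if k < j then min (1 / ((j : ℝ) + 1)) (y k) else y k),
      Set.range_nonempty _, ?_, ⟨?_, ?_⟩, ?_⟩
    · rintro _ ⟨i, rfl⟩ _ ⟨j, rfl⟩
      exact ⟨_, ⟨max i j, rfl⟩, hanti (le_max_left i j), hanti (le_max_right i j)⟩
    · rintro _ ⟨j, rfl⟩ k
      have hk : 0 ≤ y k := hy k
      dsimp only [Pi.zero_apply]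
      split_ifs
      · exact le_min (by positivity) hk
      · exact hk
    · intro b hb k
      refine le_of_forall_pos_le_add fun ε hε => ?_
      obtain ⟨n, hn⟩ := exists_nat_one_div_lt hε
      have h1 := hb ⟨max n (k + 1), rfl⟩ k
      have h2 : k < max n (k + 1) := lt_of_lt_of_le (Nat.lt_succ_self k) (le_max_right _ _)
      dsimp only at h1
      rw [if_pos h2] at h1
      have h3 : 1 / (((max n (k + 1) : ℕ) : ℝ) + 1) ≤ 1 / ((n : ℝ) + 1) := by
        gcongr
        exact le_max_left _ _
      have h4 := h1.trans (min_le_left _ _)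
      simp only [Pi.zero_apply]
      linarith
    · rintro _ ⟨j, rfl⟩
      refine ⟨(j + 1, j + 1), ?_⟩
      rintro ⟨m, n⟩ ⟨hm, hn⟩ k
      have hk : 0 ≤ y k := hy k
      dsimp only at hm hn
      simp only [sub_zero, Pi.abs_apply, Pi.inf_apply]
      rw [abs_of_nonneg (le_inf (abs_nonneg _) hk)]
      split_ifs with h
      · refine min_le_min_right _ ?_
        have hx : xnet (m, n) k = 1 / ((m : ℝ) + n) := by
          unfold xnet
          rw [if_neg]
          dsimp only
          omega
        have hm' : (j : ℝ) + 1 ≤ m := by exact_mod_cast hm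
        have hn' : (0 : ℝ) ≤ n := by positivity
        rw [hx, abs_of_nonneg (by positivity)]
        exact one_div_le_one_div_of_le (by positivity) (by linarith)
      · exact min_le_right _ _
end

section
/- Direct ℕ × ℕ by (m', n') ≥ (m, n) iff m' ≥ m and n' ≥ n, and define the net (x_{(m,n)}) in ℝ^ℕ by x_{(m,n)}(k) = m + n if m ≤ k or n ≤ k, and x_{(m,n)}(k) = 1/(m+n) if m > k and n > k. Then no tail of this net is order bounded in ℝ^ℕ: for every (m₀, n₀) there is no y ∈ ℝ^ℕ with |x_{(m,n)}| ≤ y for all (m,n) ≥ (m₀,n₀). In particular, the net is not order convergent in ℝ^ℕ, although it is uo-Cauchy there. -/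
open Filter Set

theorem xnet_tail (m₀ n₀ : ℕ) :
    ¬ ∃ y : ℕ → ℝ, ∀ m n : ℕ, m₀ ≤ m → n₀ ≤ n → |xnet (m, n)| ≤ y := by
  rintro ⟨y, hy⟩
  obtain ⟨n, hn⟩ := exists_nat_gt (y m₀)
  have h := hy m₀ (max n n₀) le_rfl (le_max_right _ _) m₀
  have h1 : xnet (m₀, max n n₀) m₀ = (m₀ : ℝ) + ((max n n₀ : ℕ) : ℝ) := by
    simp [xnet]
  rw [Pi.abs_apply, h1] at h
  have h2 : (n : ℝ) ≤ ((max n n₀ : ℕ) : ℝ) := by exact_mod_cast le_max_left n n₀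
  have h3 : (0 : ℝ) ≤ (m₀ : ℝ) := Nat.cast_nonneg _
  have h4 := le_abs_self ((m₀ : ℝ) + ((max n n₀ : ℕ) : ℝ))
  linarith

theorem xnet_small (N k : ℕ) (hk : k ≤ N) (p : ℕ × ℕ) (hp : (N + 1, N + 1) ≤ p) :
    0 ≤ xnet p k ∧ xnet p k ≤ 1 / ((N : ℝ) + 1) := by
  obtain ⟨h1, h2⟩ := hp
  simp only at h1 h2
  have hx : xnet p k = 1 / ((p.1 : ℝ) + p.2) := by
    unfold xnet
    rw [if_neg]
    omega
  rw [hx]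
  refine ⟨by positivity, ?_⟩
  have h3 : ((N : ℝ) + 1) ≤ p.1 := by exact_mod_cast h1
  have h4 : (0 : ℝ) ≤ p.2 := Nat.cast_nonneg _
  apply one_div_le_one_div_of_le
  · positivity
  · linarith

theorem xnet_uoCauchy : UoCauchy xnet := by
  intro y hy
  let a : ℕ → (ℕ → ℝ) := fun N k => if k ≤ N then 1 / ((N : ℝ) + 1) else y k + 1
  have hanti : Antitone a := by
    intro M N hMN k
    have hyk : 0 ≤ y k := hy k
    have hMN' : (M : ℝ) ≤ N := by exact_mod_cast hMN
    simp only [a]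
    by_cases h1 : k ≤ M
    · rw [if_pos h1, if_pos (h1.trans hMN)]
      apply one_div_le_one_div_of_le
      · positivity
      · linarith
    · rw [if_neg h1]
      split_ifs
      · have : 1 / ((N : ℝ) + 1) ≤ 1 := by
          rw [div_le_one (by positivity)]
          have : (0 : ℝ) ≤ N := Nat.cast_nonneg _
          linarith
        linarith
      · exact le_rfl
  refine ⟨Set.range a, ⟨a 0, 0, rfl⟩, ?_, ⟨?_, ?_⟩, ?_⟩
  · rintro _ ⟨M, rfl⟩ _ ⟨N, rfl⟩
    exact ⟨a (max M N), ⟨_, rfl⟩, hanti (le_max_left _ _), hanti (le_max_right _ _)⟩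
  · rintro _ ⟨N, rfl⟩ k
    have hyk : 0 ≤ y k := hy k
    simp only [a, Pi.zero_apply]
    split_ifs
    · positivity
    · linarith
  · intro b hb k
    by_contra! hlt
    simp only [Pi.zero_apply] at hlt
    obtain ⟨n, hn⟩ := exists_nat_one_div_lt hlt
    have h := hb ⟨max n k, rfl⟩ k
    have h' : b k ≤ 1 / (((max n k : ℕ) : ℝ) + 1) := by
      simpa only [a, if_pos (le_max_right n k)] using h
    have h2 : (n : ℝ) ≤ ((max n k : ℕ) : ℝ) := by exact_mod_cast le_max_left n k
    have h3 : 1 / (((max n k : ℕ) : ℝ) + 1) ≤ 1 / ((n : ℝ) + 1) := by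
      apply one_div_le_one_div_of_le
      · positivity
      · linarith
    linarith
  · rintro _ ⟨N, rfl⟩
    refine ⟨((N + 1, N + 1), (N + 1, N + 1)), ?_⟩
    rintro ⟨p, q⟩ ⟨hp, hq⟩ k
    have hyk : 0 ≤ y k := hy k
    simp only [sub_zero, Pi.abs_apply, Pi.inf_apply, Pi.sub_apply]
    rw [abs_of_nonneg (le_inf (abs_nonneg _) hyk)]
    simp only [a]
    split_ifs with hk
    · refine inf_le_left.trans ?_
      obtain ⟨h1, h2⟩ := xnet_small N k hk p hp
      obtain ⟨h3, h4⟩ := xnet_small N k hk q hq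
      rw [abs_le]
      constructor <;> linarith
    · refine inf_le_right.trans ?_
      linarith

/-- No tail of the net `xnet` is order bounded in `ℝ^ℕ`; in particular
the net is not order convergent in `ℝ^ℕ`, although it is uo-Cauchy there. -/
theorem stmt12 :
    (∀ m₀ n₀ : ℕ, ¬ ∃ y : ℕ → ℝ, ∀ m n : ℕ, m₀ ≤ m → n₀ ≤ n → |xnet (m, n)| ≤ y) ∧
    (¬ ∃ l : ℕ → ℝ, OrderTendsto xnet l) ∧
    UoCauchy xnet := by
  refine ⟨xnet_tail, ?_, xnet_uoCauchy⟩
  rintro ⟨l, A, ⟨a, ha⟩, -, -, hA⟩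
  obtain ⟨⟨m₀, n₀⟩, h⟩ := hA a ha
  refine xnet_tail m₀ n₀ ⟨a + |l|, fun m n hm hn k => ?_⟩
  have h1 := h (m, n) ⟨hm, hn⟩ k
  simp only [Pi.abs_apply, Pi.sub_apply, Pi.add_apply] at h1 ⊢
  have h2 := abs_sub_abs_le_abs_sub (xnet (m, n) k) (l k)
  linarith
end
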